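/- Fix d ≥ 1, an integer L ≥ 2, β > 1, integers k > ℓ ≥ 1 with γ = 2^{−k} and δ = ℓ/k, and an integer 0 ≤ N_p ≤ 2^{dk}L^d; set m = 2N_p/(2^{dk}L^d) − 1. Let σ* : T_L → [−1,1] be measurable with L^{−d}∫_{T_L}σ*(r)dr = m, F(σ*) = inf{ F(σ) : σ : T_L → [−1,1] measurable, L^{−d}∫_{T_L}σ(r)dr = m }, and assume σ* is Lipschitz with Lipschitz constant Λ. Then there is a constant c > 0, depending only on d, β, J and Λ, such that for every coarse-grained configuration σ_δ ∈ Ω^{(δ)}_{L,γ} with L^{−d}∫_{T_L}σ_δ(r)dr = m (so that E(σ_δ) ⊆ Ω_{L,γ,N_p}), | log P_{can,N_p}[E(σ_δ)] + β γ^{−d} ( F(σ_δ) − F(σ*) ) | ≤ c · γ^{−d} L^d (γ^δ + γ^{d(1−δ)}) log(1/γ). -/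

import Mathlib

open MeasureTheory Real

/-- The `d`-dimensional torus `(ℝ/Lℤ)^d` with its Lebesgue (Haar) measure. -/
abbrev Torus (d L : ℕ) := Fin d → AddCircle (L : ℝ)

/-- Geodesic (Euclidean) distance on the torus. -/
noncomputable def torusDist {d L : ℕ} (x y : Torus d L) : ℝ :=
  Real.sqrt (∑ i, (dist (x i) (y i)) ^ 2)

/-- The entropy function `i`. (`Real.log 0 = 0` gives the convention `0 · log 0 = 0`.) -/
noncomputable def ient (m : ℝ) : ℝ :=
  (1 - m) / 2 * Real.log ((1 - m) / 2) + (1 + m) / 2 * Real.log ((1 + m) / 2)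

/-- The hypotheses on the Kac interaction potential `J : [0,∞) → ℝ`: nonnegative, bounded,
continuous, supported in `[0,1]`, smooth and strictly decreasing on `[0,1]`, and normalized
so that `∫_{ℝ^d} J(|r|) dr = 1`. -/
structure KacPotential (d : ℕ) (J : ℝ → ℝ) : Prop where
  nonneg : ∀ r, 0 ≤ J r
  bounded : ∃ M, ∀ r, |J r| ≤ M
  continuous : Continuous J
  support : ∀ r, 1 < r → J r = 0
  strictAnti : StrictAntiOn J (Set.Icc 0 1)
  smooth : ContDiffOn ℝ (⊤ : ℕ∞) J (Set.Icc 0 1)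
  normalized : (∫ r : EuclideanSpace ℝ (Fin d), J ‖r‖) = 1

/-- The Gates–Penrose–Lebowitz free energy functional
`F(σ) = (1/β)∫ i(σ(x)) dx − (1/2)∫∫ J(|x−y|) σ(x) σ(y) dx dy`. -/
noncomputable def GPL (d L : ℕ) [Fact ((0:ℝ) < L)] (β : ℝ) (J : ℝ → ℝ)
    (σ : Torus d L → ℝ) : ℝ :=
  (1 / β) * (∫ x, ient (σ x))
    - (1 / 2) * ∫ x, ∫ y, J (torusDist x y) * σ x * σ y

open scoped Classical

/-- The representative coordinate in `[0, L)` of a point of the circle `ℝ/Lℤ`. -/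
noncomputable def torusCoord {L : ℕ} [Fact ((0:ℝ) < L)] (x : AddCircle (L:ℝ)) : ℝ :=
  ((AddCircle.equivIco (L:ℝ) 0) x).1

/-- Index of the dyadic cube of side `2^{-n}` (from the partition `Q^{(n)}`) containing `x`. -/
noncomputable def cubeIdx {d : ℕ} (L : ℕ) [Fact ((0:ℝ) < L)] (n : ℕ) (x : Torus d L) :
    Fin d → ℤ := fun i => ⌊torusCoord (x i) * 2 ^ n⌋

/-- The cube of the partition `Q^{(n)}` containing `x`. -/
noncomputable def cubeOf {d : ℕ} (L : ℕ) [Fact ((0:ℝ) < L)] (n : ℕ) (x : Torus d L) :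
    Set (Torus d L) := {y | cubeIdx L n y = cubeIdx L n x}

/-- Coarse graining `π^{(δ)}`: averaging over the cubes of side `2^{-n}` of `Q^{(n)}`. -/
noncomputable def coarse {d : ℕ} (L : ℕ) [Fact ((0:ℝ) < L)] (n : ℕ)
    (f : Torus d L → ℝ) : Torus d L → ℝ :=
  fun x => (∫ y in cubeOf L n x, f y) / (volume (cubeOf L n x)).toReal

/-- The microscopic lattice sites, indexing `γℤ^d ∩ T_L` with `γ = 2^{-k}`. -/
abbrev Site (d L k : ℕ) := Fin d → Fin (2 ^ k * L)

/-- Microscopic spin configurations (`true` = occupied, i.e. spin `+1`). -/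
abbrev ConfigSpace (d L k : ℕ) := Site d L k → Bool

/-- The spin value (`±1`) of a site. -/
def spin (b : Bool) : ℝ := if b then 1 else -1

/-- The position in the torus of a lattice site. -/
noncomputable def sitePos {d : ℕ} (L k : ℕ) (p : Site d L k) : Torus d L :=
  fun i => (((p i : ℝ) * (2:ℝ) ^ (-(k:ℤ)) : ℝ) : AddCircle (L:ℝ))

/-- The lattice site whose fine cube (of side `2^{-k}`) contains the point `x` of the torus. -/
noncomputable def siteOf {d : ℕ} (L k : ℕ) [Fact ((0:ℝ) < L)] (x : Torus d L) : Site d L k :=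
  fun i => ⟨(⌊torusCoord (x i) * 2 ^ k⌋).toNat % (2 ^ k * L),
    Nat.mod_lt _ (Nat.mul_pos (pow_pos (by norm_num) k)
      (by have h := (Fact.out : (0:ℝ) < L); exact_mod_cast h))⟩

/-- A microscopic configuration viewed as a `±1`-valued step function on the torus,
constant on each cube of the fine partition `Q^{(k)}`. -/
noncomputable def stepFun {d : ℕ} (L k : ℕ) [Fact ((0:ℝ) < L)]
    (s : ConfigSpace d L k) : Torus d L → ℝ :=
  fun x => spin (s (siteOf L k x))

/-- `γ = 2^{-k}`, the Kac scaling parameter. -/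
noncomputable def gam (k : ℕ) : ℝ := (2:ℝ) ^ (-(k:ℤ))

/-- The Kac Hamiltonian `H_{γ,L}(s) = -(γ^d/2) ∑_{x,y ∈ Λ_{L,γ}} J(|x-y|) s(x) s(y)`. -/
noncomputable def Ham {d : ℕ} (L k : ℕ) (J : ℝ → ℝ) (s : ConfigSpace d L k) : ℝ :=
  -((gam k) ^ d / 2) * ∑ p : Site d L k, ∑ q : Site d L k,
      J (torusDist (sitePos L k p) (sitePos L k q)) * spin (s p) * spin (s q)

/-- The number of occupied sites (sites with spin `+1`) of a configuration. -/
def numOnes {d : ℕ} (L k : ℕ) (s : ConfigSpace d L k) : ℕ :=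
  (Finset.univ.filter fun p => s p = true).card

/-- The canonical Gibbs probability, at inverse temperature `β` and particle number `Np`,
of an event `A` (as an event in `Ω_{L,γ,Np}`). -/
noncomputable def Pcan {d : ℕ} (L k : ℕ) (β : ℝ) (J : ℝ → ℝ) (Np : ℕ)
    (A : Set (ConfigSpace d L k)) : ℝ :=
  (∑ s ∈ Finset.univ.filter
      (fun s : ConfigSpace d L k => s ∈ A ∧ numOnes L k s = Np),
      Real.exp (-β * Ham L k J s)) /
  (∑ s ∈ Finset.univ.filter (fun s : ConfigSpace d L k => numOnes L k s = Np),
      Real.exp (-β * Ham L k J s))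

/-- The lift of a function on the torus to a (periodic) function on `ℝ^d`. -/
noncomputable def liftTorus {d L : ℕ} (φ : Torus d L → ℝ) : EuclideanSpace ℝ (Fin d) → ℝ :=
  fun v => φ (fun i => ((v i : ℝ) : AddCircle (L:ℝ)))

/-!
The block averages `σ_δ` determine the occupation number of each coarse block, so `E(σ_δ)` has a
product of binomial coefficients as its cardinality; the logarithm of each factor is `-n i(·)` up to
`log (n + 1)`, with `n = γ^{-d(1-δ)}` sites per block. As the interaction is Lipschitz, moving
points to the corners of their blocks shows that the energy is `γ^{-d}` times the energy of `σ_δ`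
on the whole class, up to an error of relative order `γ^δ`. Hence every class has Gibbs weight
`exp (-βγ^{-d} F(σ_δ))` up to the claimed error.

The partition function is a sum of at most `(n + 1)^{#blocks}` such weights, none of which exceeds
`exp (-βγ^{-d} F(σ*))` by minimality of `σ*`. Conversely, rounding the block averages of `σ*` to
realizable ones without changing their sum gives a class whose free energy is almost that of `σ*`:
by Jensen, block averaging can only lower the entropy part of `F`, and it hardly moves the energy.
-/

/-! ### Entropy -/

lemma ient_eq_neg_binEntropy (m : ℝ) : ient m = -binEntropy ((1 + m) / 2) := by
  rw [binEntropy_eq_negMulLog_add_negMulLog_one_sub, show 1 - (1 + m) / 2 = (1 - m) / 2 by ring]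
  simp only [ient, negMulLog]
  ring

lemma continuous_ient : Continuous ient := by
  rw [funext ient_eq_neg_binEntropy]
  fun_prop

lemma convexOn_ient : ConvexOn ℝ (Set.Icc (-1) 1) ient := by
  rw [funext ient_eq_neg_binEntropy]
  have h := (strictConcave_binEntropy.concaveOn.comp_affineMap
    (AffineMap.lineMap (1 / 2 : ℝ) 1)).neg
  have h_image (m : ℝ) : AffineMap.lineMap (1 / 2 : ℝ) 1 m = (1 + m) / 2 := by
    simp only [AffineMap.lineMap_apply, vsub_eq_sub, vadd_eq_add, smul_eq_mul]
    ring
  refine (h.subset (fun m hm => ?_) (convex_Icc _ _)).congr fun m _ => ?_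
  · rw [Set.mem_preimage, h_image, Set.mem_Icc]
    constructor <;> linarith [hm.1, hm.2]
  · simp only [Pi.neg_apply, Function.comp_apply, h_image]

lemma negMulLog_add_le {p q : ℝ} (hp : 0 ≤ p) (hq : 0 ≤ q) :
    negMulLog (p + q) ≤ negMulLog p + negMulLog q := by
  rcases hp.eq_or_lt with rfl | hp
  · simp
  rcases hq.eq_or_lt with rfl | hq
  · simp
  have hp' := mul_le_mul_of_nonneg_left (log_le_log hp (le_add_of_nonneg_right hq.le)) hp.le
  have hq' := mul_le_mul_of_nonneg_left (log_le_log hq (le_add_of_nonneg_left hp.le)) hq.le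
  simp only [negMulLog]
  linarith

lemma negMulLog_le_negMulLog_add_add {p h : ℝ} (hp : 0 ≤ p) (hh : 0 ≤ h) (hph : p + h ≤ 1) :
    negMulLog p ≤ negMulLog (p + h) + h := by
  rcases hp.eq_or_lt with rfl | hp
  · simpa using add_nonneg (negMulLog_nonneg hh (by simpa using hph)) hh
  have h_log : p * (log (p + h) - log p) ≤ h := by
    rw [← log_div (by positivity) hp.ne']
    calc p * log ((p + h) / p) ≤ p * ((p + h) / p - 1) := by
          gcongr
          exact log_le_sub_one_of_pos (by positivity)
      _ = h := by field_simp; ring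
  have h_nonpos := mul_nonpos_of_nonneg_of_nonpos hh (log_nonpos (by positivity) hph)
  simp only [negMulLog]
  linarith

lemma abs_negMulLog_sub_le {p q : ℝ} (hp : p ∈ Set.Icc (0 : ℝ) 1) (hq : q ∈ Set.Icc (0 : ℝ) 1) :
    |negMulLog p - negMulLog q| ≤ |p - q| + negMulLog |p - q| := by
  wlog h : q ≤ p generalizing p q
  · rw [abs_sub_comm, abs_sub_comm p]
    exact this hq hp (le_of_not_ge h)
  have hpq : 0 ≤ p - q := sub_nonneg.2 h
  have h_le := negMulLog_add_le hq.1 hpq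
  have h_ge := negMulLog_le_negMulLog_add_add hq.1 hpq (by linarith [hp.2])
  have h_nonneg := negMulLog_nonneg hpq (by linarith [hp.2, hq.1])
  rw [add_sub_cancel] at h_le h_ge
  rw [abs_of_nonneg hpq, abs_le]
  constructor <;> linarith

lemma monotoneOn_add_negMulLog : MonotoneOn (fun p => p + negMulLog p) (Set.Icc 0 1) := by
  intro p hp q hq hpq
  have h := negMulLog_le_negMulLog_add_add hp.1 (sub_nonneg.2 hpq) (by linarith [hq.2])
  rw [add_sub_cancel] at h
  simp only
  linarith

lemma abs_binEntropy_sub_le {p q ε : ℝ} (hp : p ∈ Set.Icc (0 : ℝ) 1) (hq : q ∈ Set.Icc (0 : ℝ) 1)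
    (hpq : |p - q| ≤ ε) (hε : ε ≤ 1) :
    |binEntropy p - binEntropy q| ≤ 2 * (ε + negMulLog ε) := by
  have h_mono : |p - q| + negMulLog |p - q| ≤ ε + negMulLog ε :=
    monotoneOn_add_negMulLog ⟨abs_nonneg _, hpq.trans hε⟩ ⟨(abs_nonneg _).trans hpq, hε⟩ hpq
  have h_left := abs_negMulLog_sub_le hp hq
  have h_right := abs_negMulLog_sub_le (Set.Icc.one_sub_mem hp) (Set.Icc.one_sub_mem hq)
  rw [sub_sub_sub_cancel_left, abs_sub_comm q] at h_right
  rw [binEntropy_eq_negMulLog_add_negMulLog_one_sub, binEntropy_eq_negMulLog_add_negMulLog_one_sub,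
    add_sub_add_comm]
  linarith [abs_add_le (negMulLog p - negMulLog q) (negMulLog (1 - p) - negMulLog (1 - q))]

lemma abs_ient_sub_le {a b : ℝ} {n : ℕ} (ha : a ∈ Set.Icc (-1 : ℝ) 1)
    (hb : b ∈ Set.Icc (-1 : ℝ) 1) (hab : |a - b| ≤ 2 / n) :
    |ient a - ient b| ≤ 2 * (1 + log n) / n := by
  have h_half {m : ℝ} (hm : m ∈ Set.Icc (-1 : ℝ) 1) : (1 + m) / 2 ∈ Set.Icc (0 : ℝ) 1 := by
    constructor <;> linarith [hm.1, hm.2]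
  have h_dist : |(1 + b) / 2 - (1 + a) / 2| ≤ (n : ℝ)⁻¹ := by
    rw [show (1 + b) / 2 - (1 + a) / 2 = -((a - b) / 2) by ring, abs_neg, abs_div, abs_two,
      div_le_iff₀ two_pos, inv_mul_eq_div]
    exact hab
  rw [ient_eq_neg_binEntropy, ient_eq_neg_binEntropy, neg_sub_neg]
  calc |binEntropy ((1 + b) / 2) - binEntropy ((1 + a) / 2)|
      ≤ 2 * ((n : ℝ)⁻¹ + negMulLog (n : ℝ)⁻¹) :=
        abs_binEntropy_sub_le (h_half hb) (h_half ha) h_dist (Nat.cast_inv_le_one n)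
    _ = 2 * (1 + log n) / n := by
        rw [negMulLog, log_inv]
        ring

/-! ### Binomial coefficients -/

lemma factorial_mul_pow_le_factorial_mul_pow (i j : ℕ) :
    j.factorial * j ^ i ≤ i.factorial * j ^ j := by
  rcases le_total i j with h | h
  · calc j.factorial * j ^ i
        = i.factorial * j.descFactorial (j - i) * j ^ i := by
          rw [← Nat.factorial_mul_descFactorial (Nat.sub_le j i), Nat.sub_sub_self h]
      _ ≤ i.factorial * j ^ (j - i) * j ^ i := by
          gcongr
          exact Nat.descFactorial_le_pow _ _
      _ = i.factorial * j ^ j := by rw [mul_assoc, ← pow_add, Nat.sub_add_cancel h]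
  · calc j.factorial * j ^ i = j.factorial * j ^ (i - j) * j ^ j := by
          rw [mul_assoc, ← pow_add, Nat.sub_add_cancel h]
      _ ≤ i.factorial * j ^ j := by
          gcongr
          exact Nat.factorial_mul_pow_sub_le_factorial h

-- The binomial distribution with success probability `j / n` has mode `j`.
lemma choose_mul_pow_le_choose_mul_pow {n i j : ℕ} (hi : i ≤ n) (hj : j ≤ n) :
    j ^ i * (n - j) ^ (n - i) * n.choose i ≤ j ^ j * (n - j) ^ (n - j) * n.choose j := by
  have h_left := factorial_mul_pow_le_factorial_mul_pow i j
  have h_right := factorial_mul_pow_le_factorial_mul_pow (n - i) (n - j)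
  have h_mul := Nat.mul_le_mul h_left h_right
  have hi' := Nat.choose_mul_factorial_mul_factorial hi
  have hj' := Nat.choose_mul_factorial_mul_factorial hj
  have h_pos : 0 < i.factorial * (n - i).factorial * (j.factorial * (n - j).factorial) := by
    positivity
  refine Nat.le_of_mul_le_mul_right ?_ h_pos
  calc j ^ i * (n - j) ^ (n - i) * n.choose i *
        (i.factorial * (n - i).factorial * (j.factorial * (n - j).factorial))
      = n.factorial * (j.factorial * j ^ i * ((n - j).factorial * (n - j) ^ (n - i))) := by
        rw [← hi']
        ring
    _ ≤ n.factorial * (i.factorial * j ^ j * ((n - i).factorial * (n - j) ^ (n - j))) := by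
        gcongr
    _ = _ := by
        rw [← hj']
        ring

lemma pow_mul_pow_mul_choose_le {n j : ℕ} (hj : j ≤ n) :
    j ^ j * (n - j) ^ (n - j) * n.choose j ≤ n ^ n := by
  have h_binomial := add_pow j (n - j) n
  simp only [Nat.cast_id] at h_binomial
  calc j ^ j * (n - j) ^ (n - j) * n.choose j
      ≤ ∑ i ∈ Finset.range (n + 1), j ^ i * (n - j) ^ (n - i) * n.choose i :=
        Finset.single_le_sum (f := fun i => j ^ i * (n - j) ^ (n - i) * n.choose i)
          (fun _ _ => Nat.zero_le _) (by simpa using Nat.lt_succ_of_le hj)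
    _ = n ^ n := by rw [← h_binomial, Nat.add_sub_of_le hj]

lemma pow_le_succ_mul_pow_mul_pow_mul_choose {n j : ℕ} (hj : j ≤ n) :
    n ^ n ≤ (n + 1) * (j ^ j * (n - j) ^ (n - j) * n.choose j) := by
  have h_binomial := add_pow j (n - j) n
  simp only [Nat.cast_id] at h_binomial
  calc n ^ n = ∑ i ∈ Finset.range (n + 1), j ^ i * (n - j) ^ (n - i) * n.choose i := by
        rw [← h_binomial, Nat.add_sub_of_le hj]
    _ ≤ ∑ _i ∈ Finset.range (n + 1), j ^ j * (n - j) ^ (n - j) * n.choose j :=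
        Finset.sum_le_sum fun i hi =>
          choose_mul_pow_le_choose_mul_pow (Nat.lt_succ_iff.1 (Finset.mem_range.1 hi)) hj
    _ = _ := by simp

lemma mul_ient_eq {n j : ℕ} (hj : j ≤ n) :
    n * ient (2 * j / n - 1) = j * log j + (n - j : ℕ) * log (n - j : ℕ) - n * log n := by
  rcases n.eq_zero_or_pos with rfl | hn
  · simp [Nat.le_zero.1 hj]
  have hn' : (n : ℝ) ≠ 0 := by positivity
  have h_left : (1 - (2 * (j : ℝ) / n - 1)) / 2 = (n - j : ℕ) / n := by
    rw [Nat.cast_sub hj]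
    field_simp
    ring
  have h_right : (1 + (2 * (j : ℝ) / n - 1)) / 2 = j / n := by ring
  have h_log (i : ℕ) : (i : ℝ) / n * log (i / n) = (i * log i - i * log n) / n := by
    rcases i.eq_zero_or_pos with rfl | hi
    · simp
    rw [log_div (by positivity) hn']
    ring
  rw [ient, h_left, h_right, h_log, h_log, Nat.cast_sub hj]
  field_simp
  ring

lemma abs_log_choose_add_mul_ient_le {n j : ℕ} (hj : j ≤ n) :
    |log (n.choose j) + n * ient (2 * j / n - 1)| ≤ log (n + 1) := by
  have h_pos (i : ℕ) : (0 : ℝ) < (i : ℝ) ^ i := by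
    rcases i.eq_zero_or_pos with rfl | hi
    · simp
    · positivity
  have h_choose : (0 : ℝ) < n.choose j := by exact_mod_cast Nat.choose_pos hj
  have h_term : (0 : ℝ) < (j : ℝ) ^ j * ((n - j : ℕ) : ℝ) ^ (n - j) * n.choose j :=
    mul_pos (mul_pos (h_pos _) (h_pos _)) h_choose
  have h_log_term : log ((j : ℝ) ^ j * ((n - j : ℕ) : ℝ) ^ (n - j) * n.choose j)
      = j * log j + (n - j : ℕ) * log (n - j : ℕ) + log (n.choose j) := by
    rw [log_mul (mul_pos (h_pos _) (h_pos _)).ne' h_choose.ne',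
      log_mul (h_pos _).ne' (h_pos _).ne', log_pow, log_pow]
  have h_upper := log_le_log h_term (by exact_mod_cast pow_mul_pow_mul_choose_le hj :
      (j : ℝ) ^ j * ((n - j : ℕ) : ℝ) ^ (n - j) * n.choose j ≤ (n : ℝ) ^ n)
  have h_lower := log_le_log (h_pos n)
    (by exact_mod_cast pow_le_succ_mul_pow_mul_pow_mul_choose hj :
      (n : ℝ) ^ n ≤ (n + 1) * ((j : ℝ) ^ j * ((n - j : ℕ) : ℝ) ^ (n - j) * n.choose j))
  rw [log_mul (by positivity) h_term.ne', h_log_term, log_pow] at h_lower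
  rw [h_log_term, log_pow] at h_upper
  have h_nonneg : 0 ≤ log ((n : ℝ) + 1) := log_nonneg (by simp)
  rw [mul_ient_eq hj, abs_le]
  constructor <;> linarith [h_nonneg]

/-! ### Rounding, counting and sums of exponentials -/

-- Partial sums are rounded, not summands: `a i = ⌊x i + S⌋ - ⌊S⌋` with `S` the earlier summands.
lemma exists_int_abs_sub_lt_one_sum_eq_floor {ι : Type*} (T : Finset ι) (x : ι → ℝ) :
    ∃ a : ι → ℤ, (∀ i, |(a i : ℝ) - x i| < 1) ∧ ∑ i ∈ T, a i = ⌊∑ i ∈ T, x i⌋ := by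
  induction T using Finset.induction_on with
  | empty =>
    refine ⟨fun i => ⌊x i⌋, fun i => abs_lt.2 ⟨?_, ?_⟩, by simp⟩
    · linarith [Int.lt_floor_add_one (x i)]
    · linarith [Int.floor_le (x i)]
  | insert i T hi ih =>
    obtain ⟨a, ha, h_sum⟩ := ih
    set S := ∑ i ∈ T, x i
    refine ⟨Function.update a i (⌊x i + S⌋ - ⌊S⌋), fun j => ?_, ?_⟩
    · rcases eq_or_ne j i with rfl | hj
      · rw [Function.update_self, Int.cast_sub, abs_lt]
        constructor <;>
          linarith [Int.floor_le S, Int.lt_floor_add_one S, Int.floor_le (x j + S),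
            Int.lt_floor_add_one (x j + S)]
      · rw [Function.update_of_ne hj]
        exact ha j
    · rw [Finset.sum_insert hi, Finset.sum_insert hi, Function.update_self,
        Finset.sum_update_of_notMem hi, h_sum, sub_add_cancel]

lemma exists_nat_le_abs_sub_le_one_sum_eq {ι : Type*} [Fintype ι] {x : ι → ℝ} {n N : ℕ}
    (hx : ∀ i, x i ∈ Set.Icc (0 : ℝ) n) (h_sum : ∑ i, x i = N) :
    ∃ a : ι → ℕ, (∀ i, a i ≤ n) ∧ (∀ i, |(a i : ℝ) - x i| ≤ 1) ∧ ∑ i, a i = N := by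
  obtain ⟨a, ha, ha_sum⟩ := exists_int_abs_sub_lt_one_sum_eq_floor Finset.univ x
  have ha_nonneg (i : ι) : 0 ≤ a i := by
    have h : (-1 : ℝ) < a i := by linarith [(abs_lt.1 (ha i)).1, (hx i).1]
    exact Int.le_of_sub_one_lt (by exact_mod_cast h)
  have ha_le (i : ι) : a i ≤ n := by
    have h : (a i : ℝ) < n + 1 := by linarith [(abs_lt.1 (ha i)).2, (hx i).2]
    exact Int.le_of_lt_add_one (by exact_mod_cast h)
  rw [h_sum, Int.floor_natCast] at ha_sum
  choose b hb using fun i => Int.eq_ofNat_of_zero_le (ha_nonneg i)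
  simp only [hb, Int.cast_natCast] at ha ha_le ha_sum
  exact ⟨b, fun i => by exact_mod_cast ha_le i, fun i => (ha i).le, by exact_mod_cast ha_sum⟩

/-- The number of occupied sites of the configuration `s` in each fibre of the map `block`. -/
def occupation {P B : Type*} [Fintype P] [DecidableEq B] (block : P → B) (s : P → Bool)
    (A : B) : ℕ :=
  (Finset.univ.filter fun p => block p = A ∧ s p = true).card

section Occupation

variable {P B : Type*} [Fintype P] [DecidableEq B] (block : P → B)

lemma occupation_le (s : P → Bool) (A : B) :
    occupation block s A ≤ (Finset.univ.filter fun p => block p = A).card :=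
  Finset.card_le_card fun p hp => by
    simp only [Finset.mem_filter, Finset.mem_univ, true_and] at hp ⊢
    exact hp.1

lemma sum_occupation [Fintype B] (s : P → Bool) :
    ∑ A, occupation block s A = (Finset.univ.filter fun p => s p = true).card := by
  rw [Finset.card_eq_sum_card_fiberwise (f := block) (t := Finset.univ)
    (fun _ _ => Finset.mem_univ _)]
  simp only [occupation, Finset.filter_filter, and_comm]

lemma card_filter_occupation_eq [Fintype B] [DecidableEq P] (a : B → ℕ) :
    (Finset.univ.filter fun s : P → Bool => occupation block s = a).card
      = ∏ A, (Finset.univ.filter fun p => block p = A).card.choose (a A) := by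
  simp_rw [← Finset.card_powersetCard, ← Fintype.card_piFinset]
  set blockSets := Fintype.piFinset fun A =>
    Finset.powersetCard (a A) (Finset.univ.filter fun p => block p = A)
  have h_subset {t : B → Finset P} (ht : t ∈ blockSets) {A : B} {p : P} (hp : p ∈ t A) :
      block p = A := by
    simpa using (Finset.mem_powersetCard.1 (Fintype.mem_piFinset.1 ht A)).1 hp
  have h_inverse {t : B → Finset P} (ht : t ∈ blockSets) (A : B) :
      (Finset.univ.filter fun p => block p = A ∧ decide (p ∈ t (block p)) = true) = t A := by
    ext p
    simp only [Finset.mem_filter, Finset.mem_univ, true_and, decide_eq_true_eq]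
    constructor
    · rintro ⟨rfl, hp⟩
      exact hp
    · intro hp
      obtain rfl := h_subset ht hp
      exact ⟨rfl, hp⟩
  refine Finset.card_bij' (fun s _ A => Finset.univ.filter fun p => block p = A ∧ s p = true)
    (fun t _ p => decide (p ∈ t (block p))) (fun s hs => ?_) (fun t ht => ?_) (fun s _ => ?_)
    (fun t ht => funext (h_inverse ht))
  · simp only [Finset.mem_filter, Finset.mem_univ, true_and] at hs
    simp only [blockSets, Fintype.mem_piFinset, Finset.mem_powersetCard]
    exact fun A => ⟨fun p => by simp +contextual, congrFun hs A⟩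
  · simp only [Finset.mem_filter, Finset.mem_univ, true_and]
    funext A
    rw [occupation, h_inverse ht]
    exact (Finset.mem_powersetCard.1 (Fintype.mem_piFinset.1 ht A)).2
  · funext p
    simp

lemma exists_occupation_eq [Finite B] {a : B → ℕ}
    (ha : ∀ A, a A ≤ (Finset.univ.filter fun p => block p = A).card) :
    ∃ s : P → Bool, occupation block s = a := by
  have := Fintype.ofFinite B
  have h_pos : 0 < (Finset.univ.filter fun s : P → Bool => occupation block s = a).card := by
    rw [card_filter_occupation_eq]
    exact Finset.prod_pos fun A _ => Nat.choose_pos (ha A)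
  obtain ⟨s, hs⟩ := Finset.card_pos.1 h_pos
  exact ⟨s, (Finset.mem_filter.1 hs).2⟩

end Occupation

lemma abs_log_sum_exp_sub_le {ι : Type*} {T : Finset ι} (hT : T.Nonempty) {f : ι → ℝ} {a ε : ℝ}
    (h : ∀ i ∈ T, |f i - a| ≤ ε) :
    |log (∑ i ∈ T, exp (f i)) - (log T.card + a)| ≤ ε := by
  have h_card : (0 : ℝ) < T.card := by exact_mod_cast hT.card_pos
  have h_log (b : ℝ) : log (T.card * exp b) = log T.card + b := by
    rw [log_mul h_card.ne' (exp_ne_zero b), log_exp]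
  have h_lower : T.card * exp (a - ε) ≤ ∑ i ∈ T, exp (f i) := by
    rw [← nsmul_eq_mul]
    exact Finset.card_nsmul_le_sum _ _ _ fun i hi =>
      exp_le_exp.2 (by linarith [(abs_le.1 (h i hi)).1])
  have h_upper : ∑ i ∈ T, exp (f i) ≤ T.card * exp (a + ε) := by
    rw [← nsmul_eq_mul]
    exact Finset.sum_le_card_nsmul _ _ _ fun i hi =>
      exp_le_exp.2 (by linarith [(abs_le.1 (h i hi)).2])
  have h_log_lower := log_le_log (by positivity) h_lower
  have h_log_upper := log_le_log (Finset.sum_pos (fun i _ => exp_pos (f i)) hT) h_upper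
  rw [h_log] at h_log_lower h_log_upper
  rw [abs_le]
  constructor <;> linarith

/-! ### Pair energies on a finite measure space -/

section Measure

variable {X : Type*} [MeasurableSpace X] {μ : Measure X}

lemma integral_comp_mul_eq_sum {ι : Type*} [Fintype ι] [MeasurableSpace ι]
    [MeasurableSingletonClass ι] {φ : X → ι} (hφ : Measurable φ) (g : ι → ℝ) {f : X → ℝ}
    (hf : Integrable f μ) :
    ∫ x, g (φ x) * f x ∂μ = ∑ i, g i * ∫ x in φ ⁻¹' {i}, f x ∂μ := by
  have h_meas (i : ι) : MeasurableSet (φ ⁻¹' {i}) := hφ (measurableSet_singleton i)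
  have h_expand (x : X) : g (φ x) * f x = ∑ i, g i * (φ ⁻¹' {i}).indicator f x := by
    rw [Finset.sum_eq_single (φ x) (fun i _ hi => ?_) (fun h => absurd (Finset.mem_univ _) h),
      Set.indicator_of_mem (by rfl)]
    rw [Set.indicator_of_notMem (fun h => hi h.symm), mul_zero]
  simp_rw [h_expand]
  rw [integral_finsetSum _ fun i _ => (hf.indicator (h_meas i)).const_mul _]
  simp_rw [integral_const_mul, integral_indicator (h_meas _)]

lemma abs_integral_integral_sub_le [IsFiniteMeasure μ] {f g : X → X → ℝ} {S : X → Set X} {b V : ℝ}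
    (hf : Integrable (Function.uncurry f) (μ.prod μ))
    (hg : Integrable (Function.uncurry g) (μ.prod μ)) (hS : ∀ x, MeasurableSet (S x))
    (hV : ∀ x, μ.real (S x) ≤ V) (hb : 0 ≤ b)
    (hfg : ∀ x y, |f x y - g x y| ≤ (S x).indicator (fun _ => b) y) :
    |(∫ x, ∫ y, f x y ∂μ ∂μ) - ∫ x, ∫ y, g x y ∂μ ∂μ| ≤ b * V * μ.real Set.univ := by
  have h_sub := integral_integral_sub' hf hg
  simp only [Function.uncurry_apply_pair] at h_sub
  rw [← h_sub, ← norm_eq_abs]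
  refine norm_integral_le_of_norm_le_const (.of_forall fun x => ?_)
  calc ‖∫ y, f x y - g x y ∂μ‖
      ≤ ∫ y, (S x).indicator (fun _ => b) y ∂μ :=
        norm_integral_le_of_norm_le ((integrable_const b).indicator (hS x)) (.of_forall (hfg x))
    _ = b * μ.real (S x) := by
        rw [integral_indicator (hS x), setIntegral_const, smul_eq_mul, mul_comm]
    _ ≤ b * V := mul_le_mul_of_nonneg_left (hV x) hb

/-- The energy `∫∫ w(x, y) σ(x) σ(y)` of a profile `σ` under a pair interaction `w`. The
interaction term of `GPL` is the case `w(x, y) = J(|x - y|)`. -/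
noncomputable def pairEnergy (μ : Measure X) (w : X → X → ℝ) (σ : X → ℝ) : ℝ :=
  ∫ x, ∫ y, w x y * σ x * σ y ∂μ ∂μ

lemma pairEnergy_comp_eq_sum {ι : Type*} [Fintype ι] [MeasurableSpace ι]
    [MeasurableSingletonClass ι] {φ : X → ι} (hφ : Measurable φ) (v : ι → ι → ℝ)
    {σ : X → ℝ} (hσ : Integrable σ μ) :
    pairEnergy μ (fun x y => v (φ x) (φ y)) σ
      = ∑ i, ∑ j, v i j * (∫ x in φ ⁻¹' {i}, σ x ∂μ) * ∫ x in φ ⁻¹' {j}, σ x ∂μ := by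
  have h_inner (x : X) : ∫ y, v (φ x) (φ y) * σ x * σ y ∂μ
      = (∑ j, v (φ x) j * ∫ y in φ ⁻¹' {j}, σ y ∂μ) * σ x := by
    rw [← integral_comp_mul_eq_sum hφ (v (φ x)) hσ, ← integral_mul_const]
    simp only [mul_right_comm]
  simp_rw [pairEnergy, h_inner]
  rw [integral_comp_mul_eq_sum hφ (fun i => ∑ j, v i j * ∫ y in φ ⁻¹' {j}, σ y ∂μ) hσ]
  simp_rw [Finset.sum_mul, mul_right_comm]

lemma abs_mul_mul_le {a b c A : ℝ} (ha : |a| ≤ A) (hb : |b| ≤ 1) (hc : |c| ≤ 1) :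
    |a * b * c| ≤ A := by
  have hA : 0 ≤ A := (abs_nonneg a).trans ha
  calc |a * b * c| = |a| * |b| * |c| := by rw [abs_mul, abs_mul]
    _ ≤ A * 1 * 1 := by gcongr
    _ = A := by ring

variable [IsFiniteMeasure μ] {w w' : X → X → ℝ} {σ τ : X → ℝ} {S : X → Set X} {M b V ε : ℝ}

lemma integrable_pairEnergy (hw : Measurable (Function.uncurry w)) (hwM : ∀ x y, |w x y| ≤ M)
    (hσ : Measurable σ) (hσ1 : ∀ x, |σ x| ≤ 1) :
    Integrable (Function.uncurry fun x y => w x y * σ x * σ y) (μ.prod μ) := by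
  refine Integrable.of_bound (C := M) ?_
    (.of_forall fun z => abs_mul_mul_le (hwM z.1 z.2) (hσ1 z.1) (hσ1 z.2))
  exact ((hw.mul (hσ.comp measurable_fst)).mul (hσ.comp measurable_snd)).aestronglyMeasurable

lemma abs_pairEnergy_sub_pairEnergy_le (hw : Measurable (Function.uncurry w))
    (hw' : Measurable (Function.uncurry w')) (hwM : ∀ x y, |w x y| ≤ M)
    (hwM' : ∀ x y, |w' x y| ≤ M) (hσ : Measurable σ) (hσ1 : ∀ x, |σ x| ≤ 1)
    (hS : ∀ x, MeasurableSet (S x)) (hV : ∀ x, μ.real (S x) ≤ V) (hb : 0 ≤ b)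
    (hww' : ∀ x y, |w x y - w' x y| ≤ (S x).indicator (fun _ => b) y) :
    |pairEnergy μ w σ - pairEnergy μ w' σ| ≤ b * V * μ.real Set.univ := by
  refine abs_integral_integral_sub_le (integrable_pairEnergy hw hwM hσ hσ1)
    (integrable_pairEnergy hw' hwM' hσ hσ1) hS hV hb fun x y => ?_
  rw [← sub_mul, ← sub_mul]
  exact abs_mul_mul_le (hww' x y) (hσ1 x) (hσ1 y)

lemma abs_pairEnergy_sub_le_of_abs_sub_le (hw : Measurable (Function.uncurry w))
    (hM : 0 ≤ M) (hwM : ∀ x y, |w x y| ≤ (S x).indicator (fun _ => M) y)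
    (hS : ∀ x, MeasurableSet (S x)) (hV : ∀ x, μ.real (S x) ≤ V)
    (hσ : Measurable σ) (hτ : Measurable τ) (hσ1 : ∀ x, |σ x| ≤ 1) (hτ1 : ∀ x, |τ x| ≤ 1)
    (hε : 0 ≤ ε) (hστ : ∀ x, |σ x - τ x| ≤ ε) :
    |pairEnergy μ w σ - pairEnergy μ w τ| ≤ 2 * ε * M * V * μ.real Set.univ := by
  have hw_bound (x y : X) : |w x y| ≤ M :=
    (hwM x y).trans (Set.indicator_le_self' (fun _ _ => hM) y)
  have h_prod (x y : X) : |σ x * σ y - τ x * τ y| ≤ 2 * ε := by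
    calc |σ x * σ y - τ x * τ y| = |(σ x - τ x) * σ y + τ x * (σ y - τ y)| := by ring_nf
      _ ≤ |σ x - τ x| * |σ y| + |τ x| * |σ y - τ y| := by
          rw [← abs_mul, ← abs_mul]
          exact abs_add_le _ _
      _ ≤ ε * 1 + 1 * ε := by
          gcongr
          exacts [hστ x, hσ1 y, hτ1 x, hστ y]
      _ = 2 * ε := by ring
  refine abs_integral_integral_sub_le (integrable_pairEnergy hw hw_bound hσ hσ1)
    (integrable_pairEnergy hw hw_bound hτ hτ1) hS hV (by positivity) fun x y => ?_
  calc |w x y * σ x * σ y - w x y * τ x * τ y| = |σ x * σ y - τ x * τ y| * |w x y| := by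
        rw [mul_assoc, mul_assoc, ← mul_sub, abs_mul, mul_comm]
    _ ≤ 2 * ε * (S x).indicator (fun _ => M) y := by
        gcongr
        exacts [h_prod x y, hwM x y]
    _ = (S x).indicator (fun _ => 2 * ε * M) y := by
        rw [← Set.indicator_const_mul]

end Measure

/-! ### Geometry of the torus and its dyadic cells -/

section Torus

variable {d L : ℕ}

lemma torusDist_eq_dist (x y : Torus d L) :
    torusDist x y = dist (WithLp.toLp 2 x) (WithLp.toLp 2 y) :=
  (PiLp.dist_eq_of_L2 _ _).symm

lemma torusDist_nonneg (x y : Torus d L) : 0 ≤ torusDist x y := sqrt_nonneg _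

lemma abs_torusDist_sub_le (x y x' y' : Torus d L) :
    |torusDist x y - torusDist x' y'| ≤ torusDist x x' + torusDist y y' := by
  simp only [torusDist_eq_dist]
  exact dist_dist_dist_le _ _ _ _

lemma dist_le_torusDist (x y : Torus d L) : dist x y ≤ torusDist x y :=
  (dist_pi_le_iff (torusDist_nonneg x y)).2 fun i => le_sqrt_of_sq_le <|
    Finset.single_le_sum (f := fun i => dist (x i) (y i) ^ 2) (fun _ _ => sq_nonneg _)
      (Finset.mem_univ i)

lemma torusDist_le_of_forall_dist_le {x y : Torus d L} {r : ℝ} (hr : 0 ≤ r)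
    (h : ∀ i, dist (x i) (y i) ≤ r) : torusDist x y ≤ √d * r := by
  rw [torusDist, ← sqrt_sq hr, ← sqrt_mul (Nat.cast_nonneg d)]
  refine sqrt_le_sqrt ?_
  calc ∑ i, dist (x i) (y i) ^ 2 ≤ ∑ _i : Fin d, r ^ 2 := by
        gcongr with i
        exact h i
    _ = d * r ^ 2 := by simp

lemma continuous_torusDist :
    Continuous fun z : Torus d L × Torus d L => torusDist z.1 z.2 := by
  unfold torusDist
  fun_prop

lemma card_site (d L n : ℕ) : (Fintype.card (Site d L n) : ℝ) = (2 ^ n) ^ d * L ^ d := by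
  simp [mul_pow]

/-- The number of cells of side `2^{-k}` in a cell of side `2^{-ℓ}`, for `ℓ ≤ k`. -/
def blockCard (d k ℓ : ℕ) : ℕ := 2 ^ (d * (k - ℓ))

lemma blockCard_pos (d k ℓ : ℕ) : 0 < blockCard d k ℓ := pow_pos two_pos _

lemma two_pow_pow_eq_mul_blockCard (d : ℕ) {k ℓ : ℕ} (h : ℓ ≤ k) :
    ((2 : ℝ) ^ k) ^ d = (2 ^ ℓ) ^ d * blockCard d k ℓ := by
  rw [blockCard, Nat.cast_pow, Nat.cast_ofNat, mul_comm d, pow_mul, ← mul_pow, ← pow_add,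
    Nat.add_sub_of_le h]

/-- The site of the coarse cell of side `2^{-ℓ}` containing the fine cell of `p`. -/
def parent {k ℓ : ℕ} (h : ℓ ≤ k) (p : Site d L k) : Site d L ℓ :=
  fun i => ⟨p i / 2 ^ (k - ℓ), by
    rw [Nat.div_lt_iff_lt_mul (by positivity), mul_right_comm, ← pow_add, Nat.add_sub_of_le h]
    exact (p i).2⟩

lemma parent_apply_val {k ℓ : ℕ} (h : ℓ ≤ k) (p : Site d L k) (i : Fin d) :
    (parent h p i : ℕ) = p i / 2 ^ (k - ℓ) := rfl

variable [Fact ((0 : ℝ) < L)]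

lemma torusCoord_mem_Ico (x : AddCircle (L : ℝ)) : torusCoord x ∈ Set.Ico (0 : ℝ) L := by
  simpa only [torusCoord, zero_add] using (AddCircle.equivIco (L : ℝ) 0 x).2

lemma coe_torusCoord (x : AddCircle (L : ℝ)) : ((torusCoord x : ℝ) : AddCircle (L : ℝ)) = x :=
  AddCircle.coe_equivIco

lemma torusCoord_coe_of_mem {t : ℝ} (ht : t ∈ Set.Ico (0 : ℝ) L) :
    torusCoord (t : AddCircle (L : ℝ)) = t :=
  AddCircle.equivIco_coe_of_mem (by rwa [zero_add])

lemma measurable_torusCoord : Measurable (torusCoord : AddCircle (L : ℝ) → ℝ) :=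
  measurable_subtype_coe.comp (AddCircle.measurableEquivIco (L : ℝ) 0).measurable

lemma volume_torusCoord_preimage_Ico {a b : ℝ} (ha : 0 ≤ a) (hb : b ≤ L) :
    volume (torusCoord ⁻¹' Set.Ico a b : Set (AddCircle (L : ℝ))) = ENNReal.ofReal (b - a) := by
  have h_meas : MeasurableSet (torusCoord ⁻¹' Set.Ico a b : Set (AddCircle (L : ℝ))) :=
    measurable_torusCoord measurableSet_Ico
  have h_inter : (QuotientAddGroup.mk : ℝ → AddCircle (L : ℝ)) ⁻¹' (torusCoord ⁻¹' Set.Ico a b) ∩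
      Set.Ico 0 (0 + (L : ℝ)) = Set.Ico a b := by
    rw [zero_add]
    ext t
    constructor
    · rintro ⟨ht, ht_mem⟩
      have h : torusCoord (t : AddCircle (L : ℝ)) ∈ Set.Ico a b := ht
      rwa [torusCoord_coe_of_mem ht_mem] at h
    · intro ht
      have ht_mem : t ∈ Set.Ico (0 : ℝ) L := ⟨ha.trans ht.1, ht.2.trans_le hb⟩
      refine ⟨?_, ht_mem⟩
      change torusCoord (t : AddCircle (L : ℝ)) ∈ Set.Ico a b
      rwa [torusCoord_coe_of_mem ht_mem]
  rw [AddCircle.add_projection_respects_measure (L : ℝ) 0 h_meas,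
    ← measure_congr ((Filter.EventuallyEq.refl _ _).inter Ico_ae_eq_Ioc), h_inter, volume_Ico]

lemma volume_real_torus : (volume : Measure (Torus d L)).real Set.univ = (L : ℝ) ^ d := by
  rw [Measure.real, ← Set.pi_univ, volume_pi_pi]
  simp

lemma volume_real_closedBall_le (x : Torus d L) {R : ℝ} (hR : 0 ≤ R) :
    (volume : Measure (Torus d L)).real (Metric.closedBall x R) ≤ (2 * R) ^ d := by
  rw [Measure.real, closedBall_pi _ hR, volume_pi_pi]
  simp_rw [AddCircle.volume_closedBall]
  rw [Finset.prod_const, Finset.card_univ, Fintype.card_fin, ENNReal.toReal_pow]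
  gcongr
  rw [ENNReal.toReal_ofReal (le_min (by positivity) (by positivity))]
  exact min_le_right _ _

lemma siteOf_apply_val (n : ℕ) (x : Torus d L) (i : Fin d) :
    (siteOf L n x i : ℕ) = ⌊torusCoord (x i) * 2 ^ n⌋₊ := by
  obtain ⟨h_nonneg, h_lt⟩ := torusCoord_mem_Ico (x i)
  have h_val : (siteOf L n x i : ℕ) = ⌊torusCoord (x i) * 2 ^ n⌋₊ % (2 ^ n * L) := rfl
  rw [h_val, Nat.mod_eq_of_lt ((Nat.floor_lt (by positivity)).2 ?_)]
  push_cast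
  rw [mul_comm]
  gcongr

lemma siteOf_eq_iff {n : ℕ} {x : Torus d L} {p : Site d L n} :
    siteOf L n x = p ↔
      ∀ i, torusCoord (x i) ∈ Set.Ico ((p i : ℝ) / 2 ^ n) (((p i : ℝ) + 1) / 2 ^ n) := by
  rw [funext_iff]
  refine forall_congr' fun i => ?_
  have h_nonneg := (torusCoord_mem_Ico (x i)).1
  rw [Fin.ext_iff, siteOf_apply_val, Nat.floor_eq_iff (by positivity), Set.mem_Ico,
    div_le_iff₀ (by positivity), lt_div_iff₀ (by positivity)]

/-- The cell of the dyadic partition `Q^{(n)}` consisting of the points whose site is `p`. -/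
def cell (L n : ℕ) [Fact ((0 : ℝ) < L)] (p : Site d L n) : Set (Torus d L) := siteOf L n ⁻¹' {p}

lemma cubeOf_eq_cell (n : ℕ) (x : Torus d L) : cubeOf L n x = cell L n (siteOf L n x) := by
  ext y
  rw [cubeOf, Set.mem_ofPred_eq, cell, Set.mem_preimage, Set.mem_singleton_iff, funext_iff,
    funext_iff]
  refine forall_congr' fun i => ?_
  have hx := (torusCoord_mem_Ico (x i)).1
  have hy := (torusCoord_mem_Ico (y i)).1
  rw [Fin.ext_iff, siteOf_apply_val, siteOf_apply_val, cubeIdx, cubeIdx,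
    ← Int.natCast_floor_eq_floor (by positivity), ← Int.natCast_floor_eq_floor (by positivity),
    Nat.cast_inj]

lemma cell_eq_pi (n : ℕ) (p : Site d L n) :
    cell L n p = Set.univ.pi fun i =>
      torusCoord ⁻¹' Set.Ico ((p i : ℝ) / 2 ^ n) (((p i : ℝ) + 1) / 2 ^ n) := by
  ext x
  simp only [cell, Set.mem_preimage, Set.mem_singleton_iff, siteOf_eq_iff, Set.mem_univ_pi]

lemma measurableSet_cell (n : ℕ) (p : Site d L n) : MeasurableSet (cell L n p) := by
  rw [cell_eq_pi]
  exact .univ_pi fun i => measurable_torusCoord measurableSet_Ico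

lemma measurable_siteOf (n : ℕ) : Measurable (siteOf L n : Torus d L → Site d L n) :=
  measurable_to_countable' (measurableSet_cell n)

lemma volume_real_cell (n : ℕ) (p : Site d L n) :
    volume.real (cell L n p) = (((2 : ℝ) ^ n) ^ d)⁻¹ := by
  have h_side (i : Fin d) :
      volume (torusCoord ⁻¹' Set.Ico ((p i : ℝ) / 2 ^ n) (((p i : ℝ) + 1) / 2 ^ n) :
        Set (AddCircle (L : ℝ))) = ENNReal.ofReal ((2 : ℝ) ^ n)⁻¹ := by
    have h_le : (p i : ℝ) + 1 ≤ L * 2 ^ n := by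
      exact_mod_cast (p i).2.trans_eq (mul_comm _ _)
    rw [volume_torusCoord_preimage_Ico (by positivity) ((div_le_iff₀ (by positivity)).2 h_le),
      ← sub_div, add_sub_cancel_left, one_div]
  rw [cell_eq_pi, Measure.real, volume_pi_pi, Finset.prod_congr rfl fun i _ => h_side i,
    Finset.prod_const, Finset.card_univ, Fintype.card_fin, ENNReal.toReal_pow,
    ENNReal.toReal_ofReal (by positivity), inv_pow]

lemma integral_comp_siteOf (n : ℕ) (g : Site d L n → ℝ) :
    ∫ x, g (siteOf L n x) = (((2 : ℝ) ^ n) ^ d)⁻¹ * ∑ p, g p := by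
  have h := integral_comp_mul_eq_sum (measurable_siteOf n) g
    (integrable_const (μ := (volume : Measure (Torus d L))) (1 : ℝ))
  simp only [mul_one, setIntegral_const, smul_eq_mul] at h
  rw [h, Finset.mul_sum]
  exact Finset.sum_congr rfl fun p _ => by rw [← cell, volume_real_cell, mul_comm]

lemma parent_siteOf {k ℓ : ℕ} (h : ℓ ≤ k) (x : Torus d L) :
    parent h (siteOf L k x) = siteOf L ℓ x := by
  have h_pow (t : ℝ) : t * 2 ^ ℓ = t * 2 ^ k / (2 ^ (k - ℓ) : ℕ) := by
    rw [eq_div_iff (by positivity), Nat.cast_pow, Nat.cast_ofNat, mul_assoc, ← pow_add,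
      Nat.add_sub_of_le h]
  funext i
  rw [Fin.ext_iff, siteOf_apply_val, parent_apply_val, siteOf_apply_val, h_pow,
    Nat.floor_div_natCast]

lemma setIntegral_cell_comp_siteOf {k ℓ : ℕ} (h : ℓ ≤ k) (A : Site d L ℓ) (g : Site d L k → ℝ) :
    ∫ x in cell L ℓ A, g (siteOf L k x)
      = (((2 : ℝ) ^ k) ^ d)⁻¹ * ∑ p with parent h p = A, g p := by
  rw [Finset.sum_filter, ← integral_comp_siteOf k fun p => if parent h p = A then g p else 0,
    ← integral_indicator (measurableSet_cell ℓ A)]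
  simp only [parent_siteOf, Set.indicator, cell, Set.mem_preimage, Set.mem_singleton_iff]

lemma card_filter_parent_eq {k ℓ : ℕ} (h : ℓ ≤ k) (A : Site d L ℓ) :
    (Finset.univ.filter fun p : Site d L k => parent h p = A).card = blockCard d k ℓ := by
  have h_volume := setIntegral_cell_comp_siteOf h A fun _ => 1
  rw [setIntegral_const, volume_real_cell, smul_eq_mul, mul_one, Finset.sum_const, nsmul_eq_mul,
    mul_one, two_pow_pow_eq_mul_blockCard d h, mul_inv, mul_assoc, left_eq_mul₀ (by positivity),
    inv_mul_eq_one₀ (by simp [blockCard])] at h_volume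
  exact_mod_cast h_volume.symm

/-- The lower corner of the cell of side `2^{-n}` containing `x`. -/
noncomputable def corner (n : ℕ) (x : Torus d L) : Torus d L := sitePos L n (siteOf L n x)

lemma torusDist_corner_le (n : ℕ) (x : Torus d L) : torusDist x (corner n x) ≤ √d * (2 ^ n)⁻¹ := by
  refine torusDist_le_of_forall_dist_le (by positivity) fun i => ?_
  obtain ⟨h_left, h_right⟩ := siteOf_eq_iff.1 (rfl : siteOf L n x = siteOf L n x) i
  rw [add_div, one_div] at h_right
  have h_corner : corner n x i = (((siteOf L n x i : ℝ) / 2 ^ n : ℝ) : AddCircle (L : ℝ)) := by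
    rw [corner, sitePos, zpow_neg, zpow_natCast, div_eq_mul_inv]
  calc dist (x i) (corner n x i)
      = ‖((torusCoord (x i) - (siteOf L n x i : ℝ) / 2 ^ n : ℝ) : AddCircle (L : ℝ))‖ := by
        rw [h_corner, AddCircle.coe_sub, coe_torusCoord, dist_eq_norm]
    _ ≤ ‖torusCoord (x i) - (siteOf L n x i : ℝ) / 2 ^ n‖ := QuotientAddGroup.norm_mk_le_norm
    _ ≤ (2 ^ n)⁻¹ := by
        rw [norm_of_nonneg (sub_nonneg.2 h_left)]
        linarith

end Torus

/-! ### Kac interactions -/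

lemma KacPotential.exists_lipschitzOnWith {d : ℕ} {J : ℝ → ℝ} (hJ : KacPotential d J) :
    ∃ K, LipschitzOnWith K J (Set.Ici 0) := by
  obtain ⟨K, hK⟩ := hJ.smooth.exists_lipschitzOnWith (by simp) (convex_Icc 0 1) isCompact_Icc
  have h_one : Set.EqOn J 0 (closure (Set.Ioi 1)) :=
    Set.EqOn.closure hJ.support hJ.continuous continuous_const
  have h_ge {r : ℝ} (hr : 1 ≤ r) : J r = 0 := h_one (by rwa [closure_Ioi])
  have h_min (r : ℝ) : J (min r 1) = J r := by
    rcases le_total r 1 with hr | hr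
    · rw [min_eq_left hr]
    · rw [min_eq_right hr, h_ge hr, h_ge le_rfl]
  have h_comp := hK.comp ((LipschitzWith.id.min_const 1).lipschitzOnWith (s := Set.Ici 0))
    fun r hr => ⟨le_min hr zero_le_one, min_le_right _ _⟩
  exact ⟨K, by simpa only [mul_one, Function.comp_def, id, h_min] using h_comp⟩

/-- The Kac interaction `J(|x - y|)` between two points of the torus. -/
noncomputable def kac {d L : ℕ} (J : ℝ → ℝ) (x y : Torus d L) : ℝ := J (torusDist x y)

/-- A constant for which replacing the points by the corners of their cells of side `2^{-n}`
changes the pair energy of the Kac interaction of a `K`-Lipschitz potential by at most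
`cornerConst d K * 2^{-n} * L^d`. -/
noncomputable def cornerConst (d : ℕ) (K : NNReal) : ℝ :=
  K * (2 * √d) * (2 * (1 + 2 * √d)) ^ d

lemma cornerConst_nonneg (d : ℕ) (K : NNReal) : 0 ≤ cornerConst d K := by
  unfold cornerConst
  positivity

lemma abs_le_of_lipschitzOnWith_of_support {J : ℝ → ℝ} {K : NNReal}
    (hJ : LipschitzOnWith K J (Set.Ici 0)) (h_supp : ∀ r, 1 < r → J r = 0) {r : ℝ} (hr : 0 ≤ r) :
    |J r| ≤ 2 * K := by
  rcases lt_or_ge 1 r with h | h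
  · rw [h_supp r h, abs_zero]
    positivity
  · have h_two := hJ.dist_le_mul r hr 2 (Set.mem_Ici.2 zero_le_two)
    rw [dist_eq, dist_eq, h_supp 2 one_lt_two, sub_zero,
      abs_of_nonpos (show r - 2 ≤ 0 by linarith)] at h_two
    linarith [mul_nonneg K.coe_nonneg hr]

section Kac

variable {d L : ℕ} {J : ℝ → ℝ} {K : NNReal}

lemma measurable_kac (hJ : LipschitzOnWith K J (Set.Ici 0)) :
    Measurable (Function.uncurry (kac J : Torus d L → Torus d L → ℝ)) :=
  (hJ.continuousOn.comp_continuous continuous_torusDist fun z =>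
    torusDist_nonneg z.1 z.2).measurable

lemma abs_kac_le_indicator (hJ : LipschitzOnWith K J (Set.Ici 0))
    (h_supp : ∀ r, 1 < r → J r = 0) (x y : Torus d L) :
    |kac J x y| ≤ (Metric.closedBall x 1).indicator (fun _ => 2 * (K : ℝ)) y := by
  by_cases hy : y ∈ Metric.closedBall x 1
  · rw [Set.indicator_of_mem hy]
    exact abs_le_of_lipschitzOnWith_of_support hJ h_supp (torusDist_nonneg x y)
  · rw [Metric.mem_closedBall, not_le, dist_comm] at hy
    rw [kac, h_supp _ (hy.trans_le (dist_le_torusDist x y)), abs_zero]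
    exact Set.indicator_nonneg (fun _ _ => by positivity) y

variable [Fact ((0 : ℝ) < L)]

lemma measurable_corner (n : ℕ) : Measurable (corner n : Torus d L → Torus d L) :=
  (measurable_of_countable (sitePos L n)).comp (measurable_siteOf n)

lemma measurable_kac_corner (hJ : LipschitzOnWith K J (Set.Ici 0)) (n : ℕ) :
    Measurable (Function.uncurry fun x y : Torus d L => kac J (corner n x) (corner n y)) := by
  have h_pair : Measurable fun z : Torus d L × Torus d L => (corner n z.1, corner n z.2) :=
    ((measurable_corner n).comp measurable_fst).prodMk ((measurable_corner n).comp measurable_snd)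
  have h_comp := (measurable_kac hJ).comp h_pair
  exact h_comp

lemma abs_torusDist_sub_torusDist_corner_le (n : ℕ) (x y : Torus d L) :
    |torusDist x y - torusDist (corner n x) (corner n y)| ≤ 2 * √d * (2 ^ n)⁻¹ := by
  linarith [abs_torusDist_sub_le x y (corner n x) (corner n y), torusDist_corner_le n x,
    torusDist_corner_le n y]

lemma abs_kac_sub_kac_corner_le (hJ : LipschitzOnWith K J (Set.Ici 0))
    (h_supp : ∀ r, 1 < r → J r = 0) (n : ℕ) (x y : Torus d L) :
    |kac J x y - kac J (corner n x) (corner n y)|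
      ≤ (Metric.closedBall x (1 + 2 * √d)).indicator
          (fun _ => K * (2 * √d * ((2 : ℝ) ^ n)⁻¹)) y := by
  have h_dist := abs_torusDist_sub_torusDist_corner_le n x y
  by_cases hy : y ∈ Metric.closedBall x (1 + 2 * √d)
  · rw [Set.indicator_of_mem hy, ← dist_eq, kac, kac]
    refine (hJ.dist_le_mul _ (torusDist_nonneg _ _) _ (torusDist_nonneg _ _)).trans ?_
    rw [dist_eq]
    gcongr
  · rw [Metric.mem_closedBall, not_le, dist_comm] at hy
    have h_far := hy.trans_le (dist_le_torusDist x y)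
    have h_pow : 2 * √d * ((2 : ℝ) ^ n)⁻¹ ≤ 2 * √d :=
      mul_le_of_le_one_right (by positivity) (inv_le_one_of_one_le₀ (one_le_pow₀ one_le_two))
    have h_sqrt := sqrt_nonneg (d : ℝ)
    have h_far' : 1 < torusDist (corner n x) (corner n y) := by
      linarith [(abs_le.1 h_dist).2]
    rw [kac, kac, h_supp _ (by linarith), h_supp _ h_far', sub_zero, abs_zero]
    exact Set.indicator_nonneg (fun _ _ => by positivity) y

variable {σ τ : Torus d L → ℝ}

lemma abs_pairEnergy_kac_sub_corner_le (hJ : LipschitzOnWith K J (Set.Ici 0))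
    (h_supp : ∀ r, 1 < r → J r = 0) (n : ℕ) (hσ : Measurable σ) (hσ1 : ∀ x, |σ x| ≤ 1) :
    |pairEnergy volume (kac J) σ
        - pairEnergy volume (fun x y => kac J (corner n x) (corner n y)) σ|
      ≤ cornerConst d K * (2 ^ n)⁻¹ * L ^ d := by
  have h_bound (x y : Torus d L) : |kac J x y| ≤ 2 * K :=
    abs_le_of_lipschitzOnWith_of_support hJ h_supp (torusDist_nonneg x y)
  refine (abs_pairEnergy_sub_pairEnergy_le (measurable_kac hJ)
    (measurable_kac_corner hJ n) h_bound
    (fun x y => h_bound _ _) hσ hσ1 (fun x => Metric.isClosed_closedBall.measurableSet)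
    (fun x => volume_real_closedBall_le x (by positivity)) (by positivity)
    (abs_kac_sub_kac_corner_le hJ h_supp n)).trans_eq ?_
  rw [volume_real_torus, cornerConst]
  ring

lemma abs_pairEnergy_kac_sub_le (hJ : LipschitzOnWith K J (Set.Ici 0))
    (h_supp : ∀ r, 1 < r → J r = 0) (hσ : Measurable σ) (hτ : Measurable τ)
    (hσ1 : ∀ x, |σ x| ≤ 1) (hτ1 : ∀ x, |τ x| ≤ 1) {ε : ℝ} (hε : 0 ≤ ε)
    (hστ : ∀ x, |σ x - τ x| ≤ ε) :
    |pairEnergy volume (kac J) σ - pairEnergy volume (kac J) τ| ≤ 4 * K * 2 ^ d * ε * L ^ d := by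
  refine (abs_pairEnergy_sub_le_of_abs_sub_le (measurable_kac hJ) (by positivity)
    (abs_kac_le_indicator hJ h_supp) (fun x => Metric.isClosed_closedBall.measurableSet)
    (fun x => volume_real_closedBall_le x zero_le_one) hσ hτ hσ1 hτ1 hε hστ).trans_eq ?_
  rw [volume_real_torus]
  ring

lemma integrable_of_abs_le_one (hσ : Measurable σ) (hσ1 : ∀ x, |σ x| ≤ 1) : Integrable σ :=
  .of_bound hσ.aestronglyMeasurable 1 (.of_forall hσ1)

lemma pairEnergy_kac_corner_eq_sum (n : ℕ) (hσ : Integrable σ) :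
    pairEnergy volume (fun x y => kac J (corner n x) (corner n y)) σ
      = ∑ p, ∑ q, kac J (sitePos L n p) (sitePos L n q)
          * (∫ x in cell L n p, σ x) * ∫ x in cell L n q, σ x :=
  pairEnergy_comp_eq_sum (measurable_siteOf n)
    (fun p q => kac J (sitePos L n p) (sitePos L n q)) hσ

-- The discretised energy only sees the integrals over the cells.
lemma abs_pairEnergy_kac_sub_le_of_setIntegral_cell_eq (hJ : LipschitzOnWith K J (Set.Ici 0))
    (h_supp : ∀ r, 1 < r → J r = 0) (n : ℕ) (hσ : Measurable σ) (hτ : Measurable τ)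
    (hσ1 : ∀ x, |σ x| ≤ 1) (hτ1 : ∀ x, |τ x| ≤ 1)
    (hστ : ∀ p, ∫ x in cell L n p, σ x = ∫ x in cell L n p, τ x) :
    |pairEnergy volume (kac J) σ - pairEnergy volume (kac J) τ|
      ≤ 2 * (cornerConst d K * (2 ^ n)⁻¹ * L ^ d) := by
  have h_corner : pairEnergy volume (fun x y => kac J (corner n x) (corner n y)) σ
      = pairEnergy volume (fun x y => kac J (corner n x) (corner n y)) τ := by
    refine (pairEnergy_kac_corner_eq_sum n (integrable_of_abs_le_one hσ hσ1)).trans ?_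
    simp only [hστ]
    exact (pairEnergy_kac_corner_eq_sum n (integrable_of_abs_le_one hτ hτ1)).symm
  have h_σ := abs_pairEnergy_kac_sub_corner_le hJ h_supp n hσ hσ1
  have h_τ := abs_pairEnergy_kac_sub_corner_le hJ h_supp n hτ hτ1
  rw [h_corner] at h_σ
  rw [abs_le] at *
  constructor <;> linarith

end Kac

/-! ### Coarse graining -/

section Coarse

variable {d L : ℕ} [Fact ((0 : ℝ) < L)] {n : ℕ} {σ : Torus d L → ℝ}

lemma volume_cell_ne_zero (p : Site d L n) : volume (cell L n p) ≠ 0 := by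
  rw [← measureReal_ne_zero_iff, volume_real_cell]
  positivity

lemma siteOf_surjective (n : ℕ) : Function.Surjective (siteOf L n : Torus d L → Site d L n) :=
  fun p => nonempty_of_measure_ne_zero (volume_cell_ne_zero p)

lemma integral_eq_sum_setIntegral_cell (n : ℕ) (hσ : Integrable σ) :
    ∫ x, σ x = ∑ p, ∫ x in cell L n p, σ x := by
  simpa only [one_mul, cell] using integral_comp_mul_eq_sum (measurable_siteOf n) (fun _ => 1) hσ

/-- The mean of a profile over the cell of a site: the value of `coarse L n σ` on that cell. -/
noncomputable def cellAverage (n : ℕ) (σ : Torus d L → ℝ) (p : Site d L n) : ℝ :=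
  ⨍ x in cell L n p, σ x

lemma cellAverage_eq (σ : Torus d L → ℝ) (p : Site d L n) :
    cellAverage n σ p = (2 ^ n) ^ d * ∫ x in cell L n p, σ x := by
  rw [cellAverage, setAverage_eq, volume_real_cell, inv_inv, smul_eq_mul]

lemma coarse_apply (n : ℕ) (σ : Torus d L → ℝ) (x : Torus d L) :
    coarse L n σ x = cellAverage n σ (siteOf L n x) := by
  rw [coarse, cubeOf_eq_cell, cellAverage, setAverage_eq, smul_eq_mul, div_eq_inv_mul, Measure.real]

lemma coarse_eq_coarse_iff {τ : Torus d L → ℝ} :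
    coarse L n σ = coarse L n τ ↔ cellAverage n σ = cellAverage n τ := by
  simp only [funext_iff, coarse_apply, (siteOf_surjective n).forall]

lemma measurable_coarse (n : ℕ) (σ : Torus d L → ℝ) : Measurable (coarse L n σ) := by
  rw [funext (coarse_apply n σ)]
  exact (measurable_of_countable (cellAverage n σ)).comp (measurable_siteOf n)

lemma setIntegral_cell_coarse (σ : Torus d L → ℝ) (p : Site d L n) :
    ∫ x in cell L n p, coarse L n σ x = ∫ x in cell L n p, σ x := by
  have h_const : Set.EqOn (coarse L n σ) (fun _ => cellAverage n σ p) (cell L n p) :=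
    fun x hx => by rw [coarse_apply, show siteOf L n x = p from hx]
  rw [setIntegral_congr_fun (measurableSet_cell n p) h_const, setIntegral_const, volume_real_cell,
    cellAverage_eq, smul_eq_mul, inv_mul_cancel_left₀ (by positivity)]

lemma integral_comp_coarse (n : ℕ) (σ : Torus d L → ℝ) (f : ℝ → ℝ) :
    ∫ x, f (coarse L n σ x) = ((2 ^ n) ^ d)⁻¹ * ∑ p, f (cellAverage n σ p) := by
  simp only [coarse_apply]
  exact integral_comp_siteOf n fun p => f (cellAverage n σ p)

lemma integral_coarse (n : ℕ) (hσ : Integrable σ) : ∫ x, coarse L n σ x = ∫ x, σ x := by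
  rw [integral_comp_coarse n σ fun t => t, integral_eq_sum_setIntegral_cell n hσ]
  simp only [cellAverage_eq, ← Finset.mul_sum]
  rw [inv_mul_cancel_left₀ (by positivity)]

lemma cellAverage_mem_Icc (hσ : Integrable σ) (hσ1 : ∀ x, σ x ∈ Set.Icc (-1 : ℝ) 1)
    (p : Site d L n) : cellAverage n σ p ∈ Set.Icc (-1 : ℝ) 1 :=
  (convex_Icc (-1) 1).set_average_mem isClosed_Icc (volume_cell_ne_zero p) (measure_ne_top _ _)
    (.of_forall hσ1) hσ.integrableOn

lemma coarse_mem_Icc (hσ : Integrable σ) (hσ1 : ∀ x, σ x ∈ Set.Icc (-1 : ℝ) 1) (x : Torus d L) :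
    coarse L n σ x ∈ Set.Icc (-1 : ℝ) 1 := by
  rw [coarse_apply]
  exact cellAverage_mem_Icc hσ hσ1 _

lemma integrable_ient_comp (hσ : Measurable σ) (hσ1 : ∀ x, σ x ∈ Set.Icc (-1 : ℝ) 1) :
    Integrable fun x => ient (σ x) := by
  obtain ⟨C, hC⟩ := isCompact_Icc.exists_bound_of_continuousOn
    (continuous_ient.continuousOn (s := Set.Icc (-1) 1))
  exact .of_bound (continuous_ient.measurable.comp hσ).aestronglyMeasurable C
    (.of_forall fun x => hC _ (hσ1 x))

lemma integral_ient_coarse_le (n : ℕ) (hσ : Measurable σ) (hσ1 : ∀ x, σ x ∈ Set.Icc (-1 : ℝ) 1) :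
    ∫ x, ient (coarse L n σ x) ≤ ∫ x, ient (σ x) := by
  have h_int : Integrable σ := integrable_of_abs_le_one hσ fun x => abs_le.2 (hσ1 x)
  have h_ient := integrable_ient_comp hσ hσ1
  have h_jensen (p : Site d L n) :
      ient (cellAverage n σ p) ≤ (2 ^ n) ^ d * ∫ x in cell L n p, ient (σ x) := by
    rw [← cellAverage_eq fun x => ient (σ x)]
    exact convexOn_ient.map_set_average_le continuous_ient.continuousOn isClosed_Icc
      (volume_cell_ne_zero p) (measure_ne_top _ _) (.of_forall hσ1) h_int.integrableOn
      h_ient.integrableOn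
  calc ∫ x, ient (coarse L n σ x) = ((2 ^ n) ^ d)⁻¹ * ∑ p, ient (cellAverage n σ p) :=
        integral_comp_coarse n σ ient
    _ ≤ ((2 ^ n) ^ d)⁻¹ * ∑ p, (2 ^ n) ^ d * ∫ x in cell L n p, ient (σ x) := by
        gcongr with p
        exact h_jensen p
    _ = ∫ x, ient (σ x) := by
        rw [← Finset.mul_sum, inv_mul_cancel_left₀ (by positivity),
          integral_eq_sum_setIntegral_cell n h_ient]

end Coarse

/-! ### Step functions of configurations -/

lemma abs_spin (b : Bool) : |spin b| = 1 := by
  cases b <;> simp [spin]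

lemma sum_spin {P : Type*} (T : Finset P) (s : P → Bool) :
    ∑ p ∈ T, spin (s p) = 2 * (T.filter fun p => s p = true).card - T.card := by
  have h_spin (p : P) : spin (s p) = 2 * (if s p = true then 1 else 0) - 1 := by
    cases s p <;> norm_num [spin]
  simp only [h_spin, Finset.sum_sub_distrib, ← Finset.mul_sum, Finset.sum_boole, Finset.sum_const,
    nsmul_eq_mul, mul_one]

section StepFun

variable {d L k ℓ : ℕ} [Fact ((0 : ℝ) < L)]

lemma measurable_stepFun (s : ConfigSpace d L k) : Measurable (stepFun L k s) :=
  (measurable_of_countable fun p => spin (s p)).comp (measurable_siteOf k)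

lemma abs_stepFun_le_one (s : ConfigSpace d L k) (x : Torus d L) : |stepFun L k s x| ≤ 1 :=
  (abs_spin _).le

lemma stepFun_mem_Icc (s : ConfigSpace d L k) (x : Torus d L) :
    stepFun L k s x ∈ Set.Icc (-1 : ℝ) 1 :=
  abs_le.1 (abs_stepFun_le_one s x)

lemma integrable_stepFun (s : ConfigSpace d L k) : Integrable (stepFun L k s) :=
  integrable_of_abs_le_one (measurable_stepFun s) (abs_stepFun_le_one s)

lemma cellAverage_stepFun (h : ℓ ≤ k) (s : ConfigSpace d L k) (A : Site d L ℓ) :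
    cellAverage ℓ (stepFun L k s) A
      = 2 * occupation (parent h) s A / blockCard d k ℓ - 1 := by
  have h_pos : (0 : ℝ) < blockCard d k ℓ := Nat.cast_pos.2 (blockCard_pos d k ℓ)
  rw [cellAverage_eq]
  unfold stepFun
  rw [setIntegral_cell_comp_siteOf h A fun p => spin (s p), sum_spin,
    card_filter_parent_eq, Finset.filter_filter, ← occupation, two_pow_pow_eq_mul_blockCard d h]
  field_simp

lemma setIntegral_cell_stepFun (s : ConfigSpace d L k) (p : Site d L k) :
    ∫ x in cell L k p, stepFun L k s x = ((2 ^ k) ^ d)⁻¹ * spin (s p) := by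
  have h_const : Set.EqOn (stepFun L k s) (fun _ => spin (s p)) (cell L k p) :=
    fun x hx => by rw [stepFun, show siteOf L k x = p from hx]
  rw [setIntegral_congr_fun (measurableSet_cell k p) h_const, setIntegral_const, volume_real_cell,
    smul_eq_mul]

lemma coarse_stepFun_eq_iff (h : ℓ ≤ k) {s t : ConfigSpace d L k} :
    coarse L ℓ (stepFun L k s) = coarse L ℓ (stepFun L k t) ↔
      occupation (parent h) s = occupation (parent h) t := by
  have h_ne : (blockCard d k ℓ : ℝ) ≠ 0 := Nat.cast_ne_zero.2 (blockCard_pos d k ℓ).ne'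
  rw [coarse_eq_coarse_iff, funext_iff, funext_iff]
  refine forall_congr' fun A => ?_
  rw [cellAverage_stepFun h, cellAverage_stepFun h, sub_left_inj, div_left_inj' h_ne,
    mul_right_inj' two_ne_zero, Nat.cast_inj]

lemma numOnes_eq_of_coarse_eq (h : ℓ ≤ k) {s t : ConfigSpace d L k}
    (hst : coarse L ℓ (stepFun L k s) = coarse L ℓ (stepFun L k t)) :
    numOnes L k s = numOnes L k t := by
  rw [numOnes, numOnes, ← sum_occupation (parent h) s, ← sum_occupation (parent h) t,
    (coarse_stepFun_eq_iff h).1 hst]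

lemma integral_stepFun (s : ConfigSpace d L k) :
    ∫ x, stepFun L k s x = 2 * numOnes L k s / (2 ^ k) ^ d - L ^ d := by
  unfold stepFun
  rw [integral_comp_siteOf k fun p => spin (s p), sum_spin, Finset.card_univ, card_site, numOnes]
  field_simp

lemma Ham_eq_pairEnergy (J : ℝ → ℝ) (s : ConfigSpace d L k) :
    Ham L k J s = -((2 ^ k) ^ d / 2) *
      pairEnergy volume (fun x y => kac J (corner k x) (corner k y)) (stepFun L k s) := by
  have h_gam : gam k ^ d = (((2 : ℝ) ^ k) ^ d)⁻¹ := by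
    rw [gam, zpow_neg, zpow_natCast, inv_pow]
  rw [pairEnergy_kac_corner_eq_sum k (integrable_stepFun s), Ham, h_gam, Finset.mul_sum,
    Finset.mul_sum]
  refine Finset.sum_congr rfl fun p _ => ?_
  rw [Finset.mul_sum, Finset.mul_sum]
  refine Finset.sum_congr rfl fun q _ => ?_
  rw [setIntegral_cell_stepFun, setIntegral_cell_stepFun, kac]
  field_simp

end StepFun

/-! ### The error scale -/

/-- The scale `γ^{-d} L^d (γ^δ + γ^{d(1-δ)}) log(1/γ)` of the large deviation errors, with
`γ = 2^{-k}` and `δ = ℓ/k`. -/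
noncomputable def errorScale (d L k ℓ : ℕ) : ℝ :=
  (2 ^ k) ^ d * L ^ d * (gam k ^ ((ℓ : ℝ) / k) + gam k ^ (d * (1 - (ℓ : ℝ) / k))) *
    log (1 / gam k)

section ErrorScale

variable {k ℓ : ℕ}

lemma gam_rpow (k : ℕ) (x : ℝ) : gam k ^ x = ((2 : ℝ) ^ (k * x))⁻¹ := by
  rw [gam, ← rpow_intCast, ← rpow_mul zero_le_two, Int.cast_neg, Int.cast_natCast, neg_mul,
    rpow_neg zero_le_two]

lemma errorScale_eq (d L : ℕ) (hk : 0 < k) (h : ℓ ≤ k) :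
    errorScale d L k ℓ
      = (2 ^ k) ^ d * L ^ d * ((2 ^ ℓ)⁻¹ + (blockCard d k ℓ : ℝ)⁻¹) * (k * log 2) := by
  have hk' : (k : ℝ) ≠ 0 := by positivity
  have h_left : (k : ℝ) * (ℓ / k) = ℓ := mul_div_cancel₀ _ hk'
  have h_right : (k : ℝ) * (d * (1 - ℓ / k)) = (d * (k - ℓ) : ℕ) := by
    push_cast [Nat.cast_sub h]
    field_simp
  have h_log : log (1 / gam k) = k * log 2 := by
    rw [gam, one_div, ← zpow_neg, neg_neg, zpow_natCast, log_pow]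
  rw [errorScale, gam_rpow, gam_rpow, h_left, h_right, h_log, rpow_natCast, rpow_natCast,
    blockCard, Nat.cast_pow, Nat.cast_ofNat]

lemma half_le_mul_log_two (hk : 0 < k) : 1 / 2 ≤ k * log 2 := by
  have hk' : (1 : ℝ) ≤ k := by exact_mod_cast hk
  nlinarith [log_two_gt_d9]

lemma errorScale_nonneg (d L : ℕ) (hk : 0 < k) (h : ℓ ≤ k) : 0 ≤ errorScale d L k ℓ := by
  rw [errorScale_eq d L hk h]
  positivity

lemma mul_inv_two_pow_le_errorScale (d L : ℕ) (hk : 0 < k) (h : ℓ ≤ k) :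
    (2 ^ k) ^ d * (L : ℝ) ^ d * (2 ^ ℓ)⁻¹ ≤ 2 * errorScale d L k ℓ := by
  have h_half := half_le_mul_log_two hk
  calc (2 ^ k) ^ d * (L : ℝ) ^ d * (2 ^ ℓ)⁻¹
      = 2 * ((2 ^ k) ^ d * L ^ d * ((2 ^ ℓ)⁻¹ + 0) * (1 / 2)) := by ring
    _ ≤ 2 * ((2 ^ k) ^ d * L ^ d * ((2 ^ ℓ)⁻¹ + (blockCard d k ℓ : ℝ)⁻¹) * (k * log 2)) := by
        gcongr
        positivity
    _ = 2 * errorScale d L k ℓ := by rw [errorScale_eq d L hk h]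

lemma log_blockCard_add_one_le (d k ℓ : ℕ) :
    log (blockCard d k ℓ + 1) ≤ (d * k + 1) * log 2 := by
  have h_pow : (blockCard d k ℓ : ℝ) + 1 ≤ 2 ^ (d * k + 1) := by
    have h_nat : 2 ^ (d * (k - ℓ)) ≤ 2 ^ (d * k) :=
      Nat.pow_le_pow_right two_pos (Nat.mul_le_mul_left d (Nat.sub_le k ℓ))
    have h_one : 1 ≤ 2 ^ (d * k) := Nat.one_le_two_pow
    rw [blockCard]
    exact_mod_cast (by omega : 2 ^ (d * (k - ℓ)) + 1 ≤ 2 ^ (d * k + 1))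
  refine (log_le_log (by positivity) h_pow).trans_eq ?_
  rw [log_pow]
  push_cast
  rfl

lemma card_site_eq_mul_inv_blockCard (d L : ℕ) (h : ℓ ≤ k) :
    (Fintype.card (Site d L ℓ) : ℝ) = (2 ^ k) ^ d * L ^ d * (blockCard d k ℓ : ℝ)⁻¹ := by
  have h_pos := blockCard_pos d k ℓ
  rw [card_site, two_pow_pow_eq_mul_blockCard d h]
  field_simp

lemma card_site_mul_one_add_log_le_errorScale (d L : ℕ) (hk : 0 < k) (h : ℓ ≤ k) :
    Fintype.card (Site d L ℓ) * (1 + log (blockCard d k ℓ + 1)) ≤ (d + 3) * errorScale d L k ℓ := by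
  have hk' : (1 : ℝ) ≤ k := by exact_mod_cast hk
  have h_log : 1 + log (blockCard d k ℓ + 1) ≤ (d + 3) * (k * log 2) := by
    have h_mul : log 2 ≤ k * log 2 := le_mul_of_one_le_left (log_pos one_lt_two).le hk'
    linarith [log_blockCard_add_one_le d k ℓ, half_le_mul_log_two hk]
  calc Fintype.card (Site d L ℓ) * (1 + log (blockCard d k ℓ + 1))
      ≤ (2 ^ k) ^ d * L ^ d * (0 + (blockCard d k ℓ : ℝ)⁻¹) * ((d + 3) * (k * log 2)) := by
        rw [card_site_eq_mul_inv_blockCard d L h, zero_add]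
        gcongr
    _ ≤ (2 ^ k) ^ d * L ^ d * ((2 ^ ℓ)⁻¹ + (blockCard d k ℓ : ℝ)⁻¹) *
          ((d + 3) * (k * log 2)) := by
        gcongr
        positivity
    _ = (d + 3) * errorScale d L k ℓ := by
        rw [errorScale_eq d L hk h]
        ring

end ErrorScale

/-! ### Canonical ensembles -/

section Ensemble

variable {d L k ℓ : ℕ} {β : ℝ} {J : ℝ → ℝ} {K : NNReal}

/-- The configuration space `Ω_{L,γ,N}` of the canonical ensemble with particle number `N`. -/
def canonicalEnsemble (d L k N : ℕ) : Finset (ConfigSpace d L k) :=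
  Finset.univ.filter fun s => numOnes L k s = N

/-- The unnormalized Gibbs weight of a set of configurations; on the canonical ensemble it is the
canonical partition function. -/
noncomputable def gibbsSum (β : ℝ) (J : ℝ → ℝ) (T : Finset (ConfigSpace d L k)) : ℝ :=
  ∑ s ∈ T, exp (-β * Ham L k J s)

lemma gibbsSum_pos (β : ℝ) (J : ℝ → ℝ) {T : Finset (ConfigSpace d L k)} (hT : T.Nonempty) :
    0 < gibbsSum β J T :=
  Finset.sum_pos (fun _ _ => exp_pos _) hT

lemma gibbsSum_mono (β : ℝ) (J : ℝ → ℝ) {S T : Finset (ConfigSpace d L k)} (h : S ⊆ T) :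
    gibbsSum β J S ≤ gibbsSum β J T :=
  Finset.sum_le_sum_of_subset_of_nonneg h fun _ _ _ => (exp_pos _).le

variable [Fact ((0 : ℝ) < L)]

/-- The event `E(σ_δ)` for the coarse-grained configuration `σ_δ = π^{(δ)} s₀`. -/
noncomputable def profileClass (ℓ : ℕ) (s₀ : ConfigSpace d L k) : Finset (ConfigSpace d L k) :=
  Finset.univ.filter fun s => coarse L ℓ (stepFun L k s) = coarse L ℓ (stepFun L k s₀)

lemma profileClass_nonempty (ℓ : ℕ) (s : ConfigSpace d L k) : (profileClass ℓ s).Nonempty :=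
  ⟨s, Finset.mem_filter.2 ⟨Finset.mem_univ s, rfl⟩⟩

lemma profileClass_eq_filter_occupation (h : ℓ ≤ k) (s₀ : ConfigSpace d L k) :
    profileClass ℓ s₀
      = Finset.univ.filter fun s => occupation (parent h) s = occupation (parent h) s₀ := by
  simp only [profileClass, coarse_stepFun_eq_iff h]

lemma profileClass_subset_canonicalEnsemble (h : ℓ ≤ k) {N : ℕ} {s : ConfigSpace d L k}
    (hs : numOnes L k s = N) : profileClass ℓ s ⊆ canonicalEnsemble d L k N := fun t ht =>
  Finset.mem_filter.2
    ⟨Finset.mem_univ t, (numOnes_eq_of_coarse_eq h (Finset.mem_filter.1 ht).2).trans hs⟩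

lemma Pcan_eq_gibbsSum_div (h : ℓ ≤ k) (β : ℝ) (J : ℝ → ℝ) {N : ℕ} {s₀ : ConfigSpace d L k}
    (hs₀ : numOnes L k s₀ = N) :
    Pcan L k β J N {s | coarse L ℓ (stepFun L k s) = coarse L ℓ (stepFun L k s₀)}
      = gibbsSum β J (profileClass ℓ s₀) / gibbsSum β J (canonicalEnsemble d L k N) := by
  have h_event : (Finset.univ.filter fun s : ConfigSpace d L k =>
      s ∈ {s | coarse L ℓ (stepFun L k s) = coarse L ℓ (stepFun L k s₀)} ∧ numOnes L k s = N)
        = profileClass ℓ s₀ :=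
    Finset.filter_congr fun s _ =>
      and_iff_left_of_imp fun hs => (numOnes_eq_of_coarse_eq h hs).trans hs₀
  rw [Pcan, h_event, gibbsSum, gibbsSum, canonicalEnsemble]

lemma gibbsSum_canonicalEnsemble_le (h : ℓ ≤ k) {N : ℕ} {b : ℝ} (hb : 0 ≤ b)
    (h_class : ∀ s : ConfigSpace d L k, numOnes L k s = N → gibbsSum β J (profileClass ℓ s) ≤ b) :
    gibbsSum β J (canonicalEnsemble d L k N)
      ≤ (blockCard d k ℓ + 1) ^ Fintype.card (Site d L ℓ) * b := by
  set profiles := Fintype.piFinset fun _ : Site d L ℓ => Finset.range (blockCard d k ℓ + 1)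
  have h_maps (s : ConfigSpace d L k) (_ : s ∈ canonicalEnsemble d L k N) :
      occupation (parent h) s ∈ profiles :=
    Fintype.mem_piFinset.2 fun A => Finset.mem_range_succ_iff.2 <|
      (occupation_le (parent h) s A).trans_eq (card_filter_parent_eq h A)
  have h_card : (profiles.card : ℝ) = (blockCard d k ℓ + 1) ^ Fintype.card (Site d L ℓ) := by
    simp [profiles]
  rw [gibbsSum, ← Finset.sum_fiberwise_of_maps_to h_maps, ← h_card, ← nsmul_eq_mul]
  refine Finset.sum_le_card_nsmul _ _ _ fun a _ => ?_
  rcases Finset.eq_empty_or_nonempty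
    ((canonicalEnsemble d L k N).filter fun s => occupation (parent h) s = a) with h_empty | ⟨t, ht⟩
  · rwa [h_empty, Finset.sum_empty]
  · obtain ⟨ht_mem, rfl⟩ := Finset.mem_filter.1 ht
    refine (gibbsSum_mono β J fun s hs => ?_).trans (h_class t (Finset.mem_filter.1 ht_mem).2)
    rw [profileClass_eq_filter_occupation h]
    exact Finset.mem_filter.2 ⟨Finset.mem_univ s, (Finset.mem_filter.1 hs).2⟩

/-! ### The Gibbs weight of a coarse-grained configuration -/

lemma mul_GPL (hβ : β ≠ 0) (a : ℝ) (σ : Torus d L → ℝ) :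
    β * a * GPL d L β J σ
      = a * (∫ x, ient (σ x)) - β * a / 2 * pairEnergy volume (kac J) σ := by
  rw [GPL, pairEnergy]
  simp only [kac]
  field_simp

lemma abs_pairEnergy_corner_sub_coarse_le (hJ : LipschitzOnWith K J (Set.Ici 0))
    (h_supp : ∀ r, 1 < r → J r = 0) (h : ℓ ≤ k) (s : ConfigSpace d L k) :
    |pairEnergy volume (fun x y => kac J (corner k x) (corner k y)) (stepFun L k s)
        - pairEnergy volume (kac J) (coarse L ℓ (stepFun L k s))|
      ≤ 3 * (cornerConst d K * (2 ^ ℓ)⁻¹ * L ^ d) := by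
  have h_coarse_le (x : Torus d L) : |coarse L ℓ (stepFun L k s) x| ≤ 1 :=
    abs_le.2 (coarse_mem_Icc (integrable_stepFun s) (stepFun_mem_Icc s) x)
  have h_corner := abs_pairEnergy_kac_sub_corner_le hJ h_supp k (measurable_stepFun s)
    (abs_stepFun_le_one s)
  have h_coarse := abs_pairEnergy_kac_sub_le_of_setIntegral_cell_eq hJ h_supp ℓ
    (measurable_stepFun s) (measurable_coarse ℓ _) (abs_stepFun_le_one s) h_coarse_le
    fun p => (setIntegral_cell_coarse (stepFun L k s) p).symm
  have h_side : cornerConst d K * (2 ^ k)⁻¹ * (L : ℝ) ^ d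
      ≤ cornerConst d K * (2 ^ ℓ)⁻¹ * L ^ d := by
    have := cornerConst_nonneg d K
    gcongr
    exact one_le_two
  rw [abs_sub_comm] at h_corner
  linarith [abs_sub_le
    (pairEnergy volume (fun x y => kac J (corner k x) (corner k y)) (stepFun L k s))
    (pairEnergy volume (kac J) (stepFun L k s))
    (pairEnergy volume (kac J) (coarse L ℓ (stepFun L k s)))]

lemma abs_neg_mul_Ham_sub_le (hJ : LipschitzOnWith K J (Set.Ici 0))
    (h_supp : ∀ r, 1 < r → J r = 0) (hβ : 0 ≤ β) (hk : 0 < k) (h : ℓ ≤ k)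
    (s : ConfigSpace d L k) :
    |-β * Ham L k J s
        - β * (2 ^ k) ^ d / 2 * pairEnergy volume (kac J) (coarse L ℓ (stepFun L k s))|
      ≤ 3 * β * cornerConst d K * errorScale d L k ℓ := by
  have h_const := cornerConst_nonneg d K
  rw [Ham_eq_pairEnergy, ← mul_assoc, neg_mul_neg, ← mul_div_assoc, ← mul_sub, abs_mul,
    abs_of_nonneg (by positivity)]
  calc _ ≤ β * (2 ^ k) ^ d / 2 * (3 * (cornerConst d K * (2 ^ ℓ)⁻¹ * L ^ d)) := by
        gcongr
        exact abs_pairEnergy_corner_sub_coarse_le hJ h_supp h s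
    _ = 3 * β * cornerConst d K * (((2 ^ k) ^ d * L ^ d * (2 ^ ℓ)⁻¹) / 2) := by ring
    _ ≤ 3 * β * cornerConst d K * errorScale d L k ℓ := by
        gcongr
        linarith [mul_inv_two_pow_le_errorScale d L hk h]

lemma mul_integral_ient_coarse_stepFun (h : ℓ ≤ k) (s : ConfigSpace d L k) :
    (2 ^ k) ^ d * ∫ x, ient (coarse L ℓ (stepFun L k s) x)
      = ∑ A, blockCard d k ℓ * ient (2 * occupation (parent h) s A / blockCard d k ℓ - 1) := by
  simp only [integral_comp_coarse, cellAverage_stepFun h, ← Finset.mul_sum]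
  rw [two_pow_pow_eq_mul_blockCard d h]
  field_simp

lemma abs_log_card_profileClass_add_le (hk : 0 < k) (h : ℓ ≤ k) (s : ConfigSpace d L k) :
    |log (profileClass ℓ s).card + (2 ^ k) ^ d * ∫ x, ient (coarse L ℓ (stepFun L k s) x)|
      ≤ (d + 3) * errorScale d L k ℓ := by
  have h_le (A : Site d L ℓ) : occupation (parent h) s A ≤ blockCard d k ℓ :=
    (occupation_le (parent h) s A).trans_eq (card_filter_parent_eq h A)
  have h_log : log (profileClass ℓ s).card
      = ∑ A, log ((blockCard d k ℓ).choose (occupation (parent h) s A)) := by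
    rw [profileClass_eq_filter_occupation h, card_filter_occupation_eq, Nat.cast_prod, log_prod]
    · simp only [card_filter_parent_eq]
    · intro A _
      rw [card_filter_parent_eq]
      exact Nat.cast_ne_zero.2 (Nat.choose_pos (h_le A)).ne'
  rw [h_log, mul_integral_ient_coarse_stepFun h, ← Finset.sum_add_distrib]
  calc _ ≤ ∑ _A : Site d L ℓ, log (blockCard d k ℓ + 1) :=
        (Finset.abs_sum_le_sum_abs _ _).trans
          (Finset.sum_le_sum fun A _ => abs_log_choose_add_mul_ient_le (h_le A))
    _ = Fintype.card (Site d L ℓ) * log (blockCard d k ℓ + 1) := by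
        rw [Finset.sum_const, Finset.card_univ, nsmul_eq_mul]
    _ ≤ Fintype.card (Site d L ℓ) * (1 + log (blockCard d k ℓ + 1)) := by
        gcongr
        exact le_add_of_nonneg_left zero_le_one
    _ ≤ (d + 3) * errorScale d L k ℓ := card_site_mul_one_add_log_le_errorScale d L hk h

/-- The constant, in units of `errorScale`, in the estimate of the Gibbs weight of a
coarse-grained configuration. -/
noncomputable def classConst (d : ℕ) (β : ℝ) (K : NNReal) : ℝ :=
  3 * β * cornerConst d K + (d + 3)

theorem abs_log_gibbsSum_profileClass_add_le (hJ : LipschitzOnWith K J (Set.Ici 0))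
    (h_supp : ∀ r, 1 < r → J r = 0) (hβ : 0 < β) (hk : 0 < k) (h : ℓ ≤ k)
    (s₀ : ConfigSpace d L k) :
    |log (gibbsSum β J (profileClass ℓ s₀))
        + β * (2 ^ k) ^ d * GPL d L β J (coarse L ℓ (stepFun L k s₀))|
      ≤ classConst d β K * errorScale d L k ℓ := by
  rw [mul_GPL hβ.ne', classConst, add_mul]
  set E := β * (2 ^ k) ^ d / 2 * pairEnergy volume (kac J) (coarse L ℓ (stepFun L k s₀))
  have h_energy : |log (gibbsSum β J (profileClass ℓ s₀)) - (log (profileClass ℓ s₀).card + E)|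
      ≤ 3 * β * cornerConst d K * errorScale d L k ℓ := by
    refine abs_log_sum_exp_sub_le (profileClass_nonempty ℓ s₀) fun s hs => ?_
    have h_bound := abs_neg_mul_Ham_sub_le hJ h_supp hβ.le hk h s
    rwa [(Finset.mem_filter.1 hs).2] at h_bound
  have h_entropy := abs_log_card_profileClass_add_le hk h s₀
  rw [abs_le] at h_energy h_entropy ⊢
  constructor <;> linarith [h_energy.1, h_energy.2, h_entropy.1, h_entropy.2]

end Ensemble

/-! ### Approximation by configurations and the partition function -/

section PartitionFunction

variable {d L k ℓ : ℕ} [Fact ((0 : ℝ) < L)] {β : ℝ} {J : ℝ → ℝ} {K : NNReal} {σ : Torus d L → ℝ}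

lemma exists_numOnes_eq_abs_coarse_sub_le (h : ℓ ≤ k) {N : ℕ} (hσ : Integrable σ)
    (hσ1 : ∀ x, σ x ∈ Set.Icc (-1 : ℝ) 1) (h_mean : ∫ x, σ x = 2 * N / (2 ^ k) ^ d - L ^ d) :
    ∃ s : ConfigSpace d L k, numOnes L k s = N ∧
      ∀ x, |coarse L ℓ (stepFun L k s) x - coarse L ℓ σ x| ≤ 2 / blockCard d k ℓ := by
  have h_pos : (0 : ℝ) < blockCard d k ℓ := Nat.cast_pos.2 (blockCard_pos d k ℓ)
  set x : Site d L ℓ → ℝ := fun A => blockCard d k ℓ * ((1 + cellAverage ℓ σ A) / 2)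
  have h_mem (A : Site d L ℓ) : x A ∈ Set.Icc (0 : ℝ) (blockCard d k ℓ) := by
    obtain ⟨h_lower, h_upper⟩ := cellAverage_mem_Icc hσ hσ1 A
    exact ⟨mul_nonneg h_pos.le (by linarith), mul_le_of_le_one_right h_pos.le (by linarith)⟩
  have h_sum : ∑ A, x A = N := by
    simp only [x, cellAverage_eq]
    rw [← Finset.mul_sum, ← Finset.sum_div, Finset.sum_add_distrib, ← Finset.mul_sum,
      ← integral_eq_sum_setIntegral_cell ℓ hσ, h_mean, Finset.sum_const, Finset.card_univ,
      nsmul_eq_mul, card_site, two_pow_pow_eq_mul_blockCard d h]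
    field_simp
    ring
  obtain ⟨a, ha_le, ha, ha_sum⟩ := exists_nat_le_abs_sub_le_one_sum_eq h_mem h_sum
  obtain ⟨s, rfl⟩ := exists_occupation_eq (parent h) fun A =>
    (ha_le A).trans_eq (card_filter_parent_eq h A).symm
  refine ⟨s, (sum_occupation (parent h) s).symm.trans ha_sum, fun r => ?_⟩
  set A := siteOf L ℓ r
  have h_diff : 2 * occupation (parent h) s A / blockCard d k ℓ - 1 - cellAverage ℓ σ A
      = 2 / blockCard d k ℓ * (occupation (parent h) s A - x A) := by
    simp only [x]
    field_simp
    ring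
  rw [coarse_apply, coarse_apply, cellAverage_stepFun h, h_diff, abs_mul,
    abs_of_pos (by positivity)]
  exact mul_le_of_le_one_right (by positivity) (ha A)

lemma mul_integral_ient_coarse_stepFun_le (hk : 0 < k) (h : ℓ ≤ k) (hσ : Measurable σ)
    (hσ1 : ∀ x, σ x ∈ Set.Icc (-1 : ℝ) 1) {s : ConfigSpace d L k}
    (hs : ∀ x, |coarse L ℓ (stepFun L k s) x - coarse L ℓ σ x| ≤ 2 / blockCard d k ℓ) :
    (2 ^ k) ^ d * ∫ x, ient (coarse L ℓ (stepFun L k s) x)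
      ≤ (2 ^ k) ^ d * (∫ x, ient (σ x)) + 2 * (d + 3) * errorScale d L k ℓ := by
  have h_pos : (0 : ℝ) < blockCard d k ℓ := Nat.cast_pos.2 (blockCard_pos d k ℓ)
  have hσ_int : Integrable σ := integrable_of_abs_le_one hσ fun x => abs_le.2 (hσ1 x)
  have hs_mem := coarse_mem_Icc (n := ℓ) (integrable_stepFun s) (stepFun_mem_Icc s)
  have hσ_mem := coarse_mem_Icc (n := ℓ) hσ_int hσ1
  set ε := 2 * (1 + log (blockCard d k ℓ)) / blockCard d k ℓ
  have h_integral : ∫ x, ient (coarse L ℓ (stepFun L k s) x)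
      ≤ (∫ x, ient (coarse L ℓ σ x)) + L ^ d * ε := by
    have hσ_ient := integrable_ient_comp (measurable_coarse ℓ σ) hσ_mem
    rw [← volume_real_torus, ← smul_eq_mul, ← integral_const,
      ← integral_add hσ_ient (integrable_const _)]
    refine integral_mono (integrable_ient_comp (measurable_coarse ℓ _) hs_mem)
      (hσ_ient.add (integrable_const _)) fun x => ?_
    linarith [(abs_le.1 (abs_ient_sub_le (hs_mem x) (hσ_mem x) (hs x))).2]
  have h_error : (2 ^ k) ^ d * (L ^ d * ε) ≤ 2 * (d + 3) * errorScale d L k ℓ := by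
    calc (2 ^ k) ^ d * (L ^ d * ε)
        = 2 * (Fintype.card (Site d L ℓ) * (1 + log (blockCard d k ℓ))) := by
          rw [card_site_eq_mul_inv_blockCard d L h]
          ring
      _ ≤ 2 * (Fintype.card (Site d L ℓ) * (1 + log (blockCard d k ℓ + 1))) := by
          gcongr
          exact le_add_of_nonneg_right zero_le_one
      _ ≤ 2 * (d + 3) * errorScale d L k ℓ := by
          linarith [card_site_mul_one_add_log_le_errorScale d L hk h]
  calc _ ≤ (2 ^ k) ^ d * ((∫ x, ient (σ x)) + L ^ d * ε) := by
        gcongr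
        linarith [integral_ient_coarse_le ℓ hσ hσ1]
    _ ≤ _ := by linarith

lemma mul_pairEnergy_le_mul_pairEnergy_coarse_stepFun (hJ : LipschitzOnWith K J (Set.Ici 0))
    (h_supp : ∀ r, 1 < r → J r = 0) (hβ : 0 ≤ β) (hk : 0 < k) (h : ℓ ≤ k) (hσ : Measurable σ)
    (hσ1 : ∀ x, σ x ∈ Set.Icc (-1 : ℝ) 1) {s : ConfigSpace d L k}
    (hs : ∀ x, |coarse L ℓ (stepFun L k s) x - coarse L ℓ σ x| ≤ 2 / blockCard d k ℓ) :
    β * (2 ^ k) ^ d / 2 * pairEnergy volume (kac J) σ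
      ≤ β * (2 ^ k) ^ d / 2 * pairEnergy volume (kac J) (coarse L ℓ (stepFun L k s))
        + (2 * β * cornerConst d K + 4 * β * K * 2 ^ d * (d + 3)) * errorScale d L k ℓ := by
  have h_const := cornerConst_nonneg d K
  have hσ_abs (x : Torus d L) : |σ x| ≤ 1 := abs_le.2 (hσ1 x)
  have hσ_coarse_abs (x : Torus d L) : |coarse L ℓ σ x| ≤ 1 :=
    abs_le.2 (coarse_mem_Icc (integrable_of_abs_le_one hσ hσ_abs) hσ1 x)
  have hs_coarse_abs (x : Torus d L) : |coarse L ℓ (stepFun L k s) x| ≤ 1 :=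
    abs_le.2 (coarse_mem_Icc (integrable_stepFun s) (stepFun_mem_Icc s) x)
  have h_coarse := abs_pairEnergy_kac_sub_le_of_setIntegral_cell_eq hJ h_supp ℓ hσ
    (measurable_coarse ℓ σ) hσ_abs hσ_coarse_abs fun p => (setIntegral_cell_coarse σ p).symm
  have h_round := abs_pairEnergy_kac_sub_le hJ h_supp (measurable_coarse ℓ _)
    (measurable_coarse ℓ σ) hs_coarse_abs hσ_coarse_abs (by positivity) hs
  have h_card : (2 ^ k) ^ d * (L : ℝ) ^ d * (blockCard d k ℓ : ℝ)⁻¹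
      ≤ (d + 3) * errorScale d L k ℓ := by
    rw [← card_site_eq_mul_inv_blockCard d L h]
    refine le_trans (le_mul_of_one_le_right (Nat.cast_nonneg _) ?_)
      (card_site_mul_one_add_log_le_errorScale d L hk h)
    exact le_add_of_nonneg_right (log_nonneg (le_add_of_nonneg_left (Nat.cast_nonneg _)))
  calc _ ≤ β * (2 ^ k) ^ d / 2 * (pairEnergy volume (kac J) (coarse L ℓ (stepFun L k s))
          + (4 * K * 2 ^ d * (2 / blockCard d k ℓ) * L ^ d
            + 2 * (cornerConst d K * (2 ^ ℓ)⁻¹ * L ^ d))) := by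
        gcongr
        linarith [(abs_le.1 h_coarse).2, (abs_le.1 h_round).1]
    _ = β * (2 ^ k) ^ d / 2 * pairEnergy volume (kac J) (coarse L ℓ (stepFun L k s))
          + (β * cornerConst d K * ((2 ^ k) ^ d * L ^ d * (2 ^ ℓ)⁻¹)
            + 4 * β * K * 2 ^ d * ((2 ^ k) ^ d * L ^ d * (blockCard d k ℓ : ℝ)⁻¹)) := by ring
    _ ≤ β * (2 ^ k) ^ d / 2 * pairEnergy volume (kac J) (coarse L ℓ (stepFun L k s))
          + (β * cornerConst d K * (2 * errorScale d L k ℓ)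
            + 4 * β * K * 2 ^ d * ((d + 3) * errorScale d L k ℓ)) := by
        gcongr _ + (_ * ?_ + _ * ?_)
        exact mul_inv_two_pow_le_errorScale d L hk h
    _ = _ := by ring

/-- The constant, in units of `errorScale`, in the free energy cost of replacing a profile by a
configuration. -/
noncomputable def roundingConst (d : ℕ) (β : ℝ) (K : NNReal) : ℝ :=
  2 * (d + 3) + (2 * β * cornerConst d K + 4 * β * K * 2 ^ d * (d + 3))

lemma exists_numOnes_eq_mul_GPL_coarse_le (hJ : LipschitzOnWith K J (Set.Ici 0))
    (h_supp : ∀ r, 1 < r → J r = 0) (hβ : 0 < β) (hk : 0 < k) (h : ℓ ≤ k) {N : ℕ}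
    (hσ : Measurable σ) (hσ1 : ∀ x, σ x ∈ Set.Icc (-1 : ℝ) 1)
    (h_mean : ∫ x, σ x = 2 * N / (2 ^ k) ^ d - L ^ d) :
    ∃ s : ConfigSpace d L k, numOnes L k s = N ∧
      β * (2 ^ k) ^ d * GPL d L β J (coarse L ℓ (stepFun L k s))
        ≤ β * (2 ^ k) ^ d * GPL d L β J σ + roundingConst d β K * errorScale d L k ℓ := by
  obtain ⟨s, hsN, hs⟩ := exists_numOnes_eq_abs_coarse_sub_le h
    (integrable_of_abs_le_one hσ fun x => abs_le.2 (hσ1 x)) hσ1 h_mean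
  refine ⟨s, hsN, ?_⟩
  rw [mul_GPL hβ.ne', mul_GPL hβ.ne', roundingConst, add_mul]
  linarith [mul_integral_ient_coarse_stepFun_le hk h hσ hσ1 hs,
    mul_pairEnergy_le_mul_pairEnergy_coarse_stepFun hJ h_supp hβ.le hk h hσ hσ1 hs]

/-- `σ` minimizes the free energy among the measurable profiles with values in `[-1, 1]` and the
same mean. -/
structure IsConstrainedMinimizer (β : ℝ) (J : ℝ → ℝ) (σ : Torus d L → ℝ) : Prop where
  measurable : Measurable σ
  mem_Icc : ∀ x, σ x ∈ Set.Icc (-1 : ℝ) 1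
  GPL_le : ∀ τ : Torus d L → ℝ, Measurable τ → (∀ x, τ x ∈ Set.Icc (-1 : ℝ) 1) →
    ∫ x, τ x = ∫ x, σ x → GPL d L β J σ ≤ GPL d L β J τ

lemma integral_coarse_stepFun_eq_iff {N : ℕ} (s : ConfigSpace d L k) :
    ∫ x, coarse L ℓ (stepFun L k s) x = 2 * N / (2 ^ k) ^ d - L ^ d ↔ numOnes L k s = N := by
  rw [integral_coarse ℓ (integrable_stepFun s), integral_stepFun, sub_left_inj,
    div_left_inj' (by positivity), mul_right_inj' two_ne_zero, Nat.cast_inj]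

lemma log_gibbsSum_canonicalEnsemble_le (hJ : LipschitzOnWith K J (Set.Ici 0))
    (h_supp : ∀ r, 1 < r → J r = 0) (hβ : 0 < β) (hk : 0 < k) (h : ℓ ≤ k) {N : ℕ}
    (h_nonempty : (canonicalEnsemble d L k N).Nonempty) (hσ : IsConstrainedMinimizer β J σ)
    (h_mean : ∫ x, σ x = 2 * N / (2 ^ k) ^ d - L ^ d) :
    log (gibbsSum β J (canonicalEnsemble d L k N))
      ≤ -(β * (2 ^ k) ^ d * GPL d L β J σ)
        + (classConst d β K + (d + 3)) * errorScale d L k ℓ := by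
  set b := -(β * (2 ^ k) ^ d * GPL d L β J σ) + classConst d β K * errorScale d L k ℓ
  have h_class (s : ConfigSpace d L k) (hs : numOnes L k s = N) :
      gibbsSum β J (profileClass ℓ s) ≤ exp b := by
    rw [← log_le_iff_le_exp (gibbsSum_pos β J (profileClass_nonempty ℓ s))]
    have h_min : GPL d L β J σ ≤ GPL d L β J (coarse L ℓ (stepFun L k s)) :=
      hσ.GPL_le _ (measurable_coarse ℓ _)
        (coarse_mem_Icc (integrable_stepFun s) (stepFun_mem_Icc s))
        (((integral_coarse_stepFun_eq_iff s).2 hs).trans h_mean.symm)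
    have h_scaled : β * (2 ^ k) ^ d * GPL d L β J σ
        ≤ β * (2 ^ k) ^ d * GPL d L β J (coarse L ℓ (stepFun L k s)) := by gcongr
    linarith [(abs_le.1 (abs_log_gibbsSum_profileClass_add_le hJ h_supp hβ hk h s)).2]
  calc log (gibbsSum β J (canonicalEnsemble d L k N))
      ≤ log ((blockCard d k ℓ + 1) ^ Fintype.card (Site d L ℓ) * exp b) :=
        log_le_log (gibbsSum_pos β J h_nonempty)
          (gibbsSum_canonicalEnsemble_le h (exp_pos b).le h_class)
    _ = Fintype.card (Site d L ℓ) * log (blockCard d k ℓ + 1) + b := by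
        rw [log_mul (by positivity) (exp_ne_zero b), log_pow, log_exp]
    _ ≤ _ := by
        have h_card : (0 : ℝ) ≤ Fintype.card (Site d L ℓ) := Nat.cast_nonneg _
        linarith [h_card, card_site_mul_one_add_log_le_errorScale d L hk h]

theorem abs_log_gibbsSum_canonicalEnsemble_add_le (hJ : LipschitzOnWith K J (Set.Ici 0))
    (h_supp : ∀ r, 1 < r → J r = 0) (hβ : 0 < β) (hk : 0 < k) (h : ℓ ≤ k) {N : ℕ}
    (hσ : IsConstrainedMinimizer β J σ) (h_mean : ∫ x, σ x = 2 * N / (2 ^ k) ^ d - L ^ d) :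
    |log (gibbsSum β J (canonicalEnsemble d L k N)) + β * (2 ^ k) ^ d * GPL d L β J σ|
      ≤ (classConst d β K + roundingConst d β K + (d + 3)) * errorScale d L k ℓ := by
  have h_const := cornerConst_nonneg d K
  have h_scale := errorScale_nonneg d L hk h
  obtain ⟨s, hsN, hs⟩ :=
    exists_numOnes_eq_mul_GPL_coarse_le hJ h_supp hβ hk h hσ.measurable hσ.mem_Icc h_mean
  have h_subset := profileClass_subset_canonicalEnsemble h hsN
  have h_upper := log_gibbsSum_canonicalEnsemble_le hJ h_supp hβ hk h
    ((profileClass_nonempty ℓ s).mono h_subset) hσ h_mean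
  have h_lower : log (gibbsSum β J (profileClass ℓ s))
      ≤ log (gibbsSum β J (canonicalEnsemble d L k N)) :=
    log_le_log (gibbsSum_pos β J (profileClass_nonempty ℓ s)) (gibbsSum_mono β J h_subset)
  have h_class := abs_log_gibbsSum_profileClass_add_le hJ h_supp hβ hk h s
  have h_rounding_nonneg : 0 ≤ roundingConst d β K * errorScale d L k ℓ := by
    unfold roundingConst
    positivity
  have h_card_nonneg : 0 ≤ (d + 3) * errorScale d L k ℓ := by positivity
  simp only [add_mul] at h_upper ⊢
  rw [abs_le] at h_class ⊢
  constructor <;> linarith [h_class.1]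

lemma zpow_neg_mul_eq_density_iff (d k : ℕ) (N : ℕ) (a : ℝ) :
    (L : ℝ) ^ (-(d : ℤ)) * a = 2 * N / (2 ^ (d * k) * (L : ℝ) ^ d) - 1 ↔
      a = 2 * N / (2 ^ k) ^ d - L ^ d := by
  have hL : (0 : ℝ) < L := Fact.out
  rw [zpow_neg, zpow_natCast, mul_comm d k, pow_mul, inv_mul_eq_iff_eq_mul₀ (by positivity),
    mul_sub, mul_one]
  field_simp

theorem abs_log_Pcan_add_le (hJ : LipschitzOnWith K J (Set.Ici 0))
    (h_supp : ∀ r, 1 < r → J r = 0) (hβ : 0 < β) (hk : 0 < k) (h : ℓ ≤ k) {N : ℕ}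
    (hσ : IsConstrainedMinimizer β J σ) (h_mean : ∫ x, σ x = 2 * N / (2 ^ k) ^ d - L ^ d)
    {s₀ : ConfigSpace d L k} (hs₀ : numOnes L k s₀ = N) :
    |log (Pcan L k β J N {s | coarse L ℓ (stepFun L k s) = coarse L ℓ (stepFun L k s₀)})
        + β * (2 ^ k) ^ d * (GPL d L β J (coarse L ℓ (stepFun L k s₀)) - GPL d L β J σ)|
      ≤ (2 * classConst d β K + roundingConst d β K + (d + 3)) * errorScale d L k ℓ := by
  have h_class := abs_log_gibbsSum_profileClass_add_le hJ h_supp hβ hk h s₀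
  have h_partition := abs_log_gibbsSum_canonicalEnsemble_add_le hJ h_supp hβ hk h hσ h_mean
  have h_nonempty := profileClass_nonempty ℓ s₀
  have h_subset := profileClass_subset_canonicalEnsemble h hs₀
  rw [Pcan_eq_gibbsSum_div h β J hs₀, log_div (gibbsSum_pos β J h_nonempty).ne'
    (gibbsSum_pos β J (h_nonempty.mono h_subset)).ne']
  rw [abs_le] at h_class h_partition ⊢
  constructor <;> linarith [h_class.1, h_class.2, h_partition.1, h_partition.2]

end PartitionFunction

/-! ### The large deviation estimate -/

theorem canonical_ld_pointwise_general (d : ℕ) {β : ℝ} (hβ : 0 < β) (K : NNReal) :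
    ∃ c : ℝ, 0 < c ∧
      ∀ J : ℝ → ℝ, LipschitzOnWith K J (Set.Ici 0) → (∀ r, 1 < r → J r = 0) →
      ∀ (L k ℓ : ℕ) [Fact ((0 : ℝ) < L)], 0 < k → ℓ ≤ k →
      ∀ (Np : ℕ) (m : ℝ), m = 2 * (Np : ℝ) / (2 ^ (d * k) * (L : ℝ) ^ d) - 1 →
      ∀ σs : Torus d L → ℝ, Measurable σs → (∀ x, σs x ∈ Set.Icc (-1 : ℝ) 1) →
        (L : ℝ) ^ (-(d : ℤ)) * ∫ r, σs r = m →
        (∀ σ : Torus d L → ℝ, Measurable σ → (∀ x, σ x ∈ Set.Icc (-1 : ℝ) 1) →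
          (L : ℝ) ^ (-(d : ℤ)) * ∫ r, σ r = m → GPL d L β J σs ≤ GPL d L β J σ) →
      ∀ s₀ : ConfigSpace d L k,
        (L : ℝ) ^ (-(d : ℤ)) * ∫ r, coarse L ℓ (stepFun L k s₀) r = m →
        |log (Pcan L k β J Np
              {s | coarse L ℓ (stepFun L k s) = coarse L ℓ (stepFun L k s₀)})
            + β * ((2 : ℝ) ^ k) ^ d *
                (GPL d L β J (coarse L ℓ (stepFun L k s₀)) - GPL d L β J σs)|
          ≤ c * ((2 : ℝ) ^ k) ^ d * (L : ℝ) ^ d *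
              (gam k ^ ((ℓ : ℝ) / (k : ℝ)) + gam k ^ ((d : ℝ) * (1 - (ℓ : ℝ) / (k : ℝ)))) *
              log (1 / gam k) := by
  have h_const := cornerConst_nonneg d K
  refine ⟨2 * classConst d β K + roundingConst d β K + (d + 3),
    by unfold classConst roundingConst; positivity, ?_⟩
  intro J hJ h_supp L k ℓ _ hk h N m hm σs hσs hσs1 hσs_mean h_min s₀ hs₀
  subst hm
  simp only [zpow_neg_mul_eq_density_iff] at hσs_mean h_min hs₀
  have h_minimizer : IsConstrainedMinimizer β J σs :=
    ⟨hσs, hσs1, fun σ hσ hσ1 h_mean => h_min σ hσ hσ1 (h_mean.trans hσs_mean)⟩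
  refine (abs_log_Pcan_add_le hJ h_supp hβ hk h h_minimizer hσs_mean
    ((integral_coarse_stepFun_eq_iff s₀).1 hs₀)).trans_eq ?_
  rw [errorScale]
  ring

/-- **Canonical large deviations, pointwise form** (Theorem `propos1`, first part): let
`m = 2N_p/(2^{dk}L^d) − 1` and let `σ*` be a Lipschitz (constant `Λ`) constrained minimizer of
`F` over measurable `σ : T_L → [−1,1]` with mean `m`. There is a constant `c > 0`, depending
only on `d`, `β`, `J` and `Λ`, such that for every coarse-grained configuration
`σ_δ = π^{(δ)}(s₀)` with mean `m`,
`| log P_{can,N_p}[E(σ_δ)] + β γ^{−d} (F(σ_δ) − F(σ*)) | ≤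
  c γ^{−d} L^d (γ^δ + γ^{d(1−δ)}) log(1/γ)`, where `γ = 2^{−k}` and `δ = ℓ/k`. -/
theorem canonical_ld_pointwise (d : ℕ) (hd : 1 ≤ d) (β : ℝ) (hβ : 1 < β)
    (J : ℝ → ℝ) (hJ : KacPotential d J) (Λ : ℝ) :
    ∃ c : ℝ, 0 < c ∧
      ∀ (L k ℓ : ℕ) [Fact ((0:ℝ) < L)], 2 ≤ L → 1 ≤ ℓ → ℓ < k →
      ∀ Np : ℕ, Np ≤ 2 ^ (d * k) * L ^ d →
      ∀ m : ℝ, m = 2 * (Np:ℝ) / (2 ^ (d * k) * (L:ℝ) ^ d) - 1 →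
      ∀ σs : Torus d L → ℝ, Measurable σs → (∀ x, σs x ∈ Set.Icc (-1:ℝ) 1) →
        ((L:ℝ) ^ (-(d:ℤ)) * ∫ r, σs r) = m →
        (∀ σ : Torus d L → ℝ, Measurable σ → (∀ x, σ x ∈ Set.Icc (-1:ℝ) 1) →
          ((L:ℝ) ^ (-(d:ℤ)) * ∫ r, σ r) = m → GPL d L β J σs ≤ GPL d L β J σ) →
        (∀ x y, |σs x - σs y| ≤ Λ * torusDist x y) →
      ∀ s₀ : ConfigSpace d L k,
        ((L:ℝ) ^ (-(d:ℤ)) * ∫ r, coarse L ℓ (stepFun L k s₀) r) = m →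
        |Real.log (Pcan L k β J Np
              {s | coarse L ℓ (stepFun L k s) = coarse L ℓ (stepFun L k s₀)})
            + β * ((2:ℝ) ^ k) ^ d *
                (GPL d L β J (coarse L ℓ (stepFun L k s₀)) - GPL d L β J σs)|
          ≤ c * ((2:ℝ) ^ k) ^ d * (L:ℝ) ^ d *
              (gam k ^ ((ℓ:ℝ) / (k:ℝ)) + gam k ^ ((d:ℝ) * (1 - (ℓ:ℝ) / (k:ℝ)))) *
              Real.log (1 / gam k) := by
  obtain ⟨K, hK⟩ := hJ.exists_lipschitzOnWith
  obtain ⟨c, hc, h⟩ := canonical_ld_pointwise_general d (zero_lt_one.trans hβ) K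
  exact ⟨c, hc, fun L k ℓ _ _ _ hlk Np _ m hm σs hσs hσs1 hσs_mean h_min _ =>
    h J hK hJ.support L k ℓ (Nat.zero_lt_of_lt hlk) hlk.le Np m hm σs hσs hσs1
      hσs_mean h_min⟩
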